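/- Let Ψ be an immigration mechanism whose measure m satisfies ∫_𝕄 (z₁+z₂) m(dz) < ∞, let (P^γ_t)_{t≥0} be the corresponding transition probabilities with immigration, and let H be the moment matrix. Assume H₁₁H₂₂ − H₁₂H₂₁ > 0 and H₁₁ + H₂₂ < 0. Then there exist λ > 0 and ϑ > 0 such that for every t ≥ 0 and all x, y ∈ 𝕄 there exists a coupling Π of P^γ_t(x,·) and P^γ_t(y,·) with ∫_{𝕄×𝕄}(|u₁−v₁|+|u₂−v₂|) Π(du,dv) ≤ ϑ·|x−y|·e^{−λt}, where |x−y| is the Euclidean norm. -/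

import Mathlib

open MeasureTheory Filter Set

noncomputable section

/-- The state space `𝕄 = [0,∞) × ℕ`, as a subset of `ℝ²`. -/
def Mset : Set (ℝ × ℝ) := {z | 0 ≤ z.1 ∧ ∃ n : ℕ, z.2 = (n : ℝ)}

/-- The space `𝕄₋₁ = [0,∞) × (ℕ ∪ {-1})`, as a subset of `ℝ²`. -/
def Mm1set : Set (ℝ × ℝ) := {z | 0 ≤ z.1 ∧ ∃ n : ℤ, (-1 : ℤ) ≤ n ∧ z.2 = (n : ℝ)}

/-- The data of a branching mechanism `(Φ₁, Φ₂)` of a mixed state branching process. -/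
structure BranchingMechanism where
  a11 : ℝ
  a21 : ℝ
  alpha : ℝ
  a21_nonneg : 0 ≤ a21
  alpha_nonneg : 0 ≤ alpha
  n1 : Measure (ℝ × ℝ)
  n2 : Measure (ℝ × ℝ)
  n1_sigmaFinite : SigmaFinite n1
  n2_sigmaFinite : SigmaFinite n2
  /-- `n₁` is supported on `𝕄` -/
  n1_supp : n1 Msetᶜ = 0
  /-- `n₂` is supported on `𝕄₋₁` -/
  n2_supp : n2 Mm1setᶜ = 0
  /-- `n₁` does not charge the origin -/
  n1_zero : n1 {0} = 0
  /-- `n₂` does not charge the origin -/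
  n2_zero : n2 {0} = 0
  /-- `n₂([0,∞) × {-1}) < ∞` -/
  n2_neg1 : n2 {z : ℝ × ℝ | z.2 = -1} ≠ ⊤
  /-- `∫ (z₁ ∧ z₁² + z₂) n₁(dz) < ∞` -/
  n1_moment : ∫⁻ z, ENNReal.ofReal (min z.1 (z.1 ^ 2) + z.2) ∂n1 ≠ ⊤
  /-- `∫ (z₁ + |z₂|) n₂(dz) < ∞` -/
  n2_moment : ∫⁻ z, ENNReal.ofReal (z.1 + |z.2|) ∂n2 ≠ ⊤

/-- `Φ₁(λ) = -a₁₁λ₁ - αλ₁² - ∫ (e^{-⟨λ,z⟩} - 1 + λ₁z₁) n₁(dz)`. -/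
def mPhi1 (B : BranchingMechanism) (l : ℝ × ℝ) : ℝ :=
  -B.a11 * l.1 - B.alpha * l.1 ^ 2 -
    ∫ z, (Real.exp (-(l.1 * z.1 + l.2 * z.2)) - 1 + l.1 * z.1) ∂B.n1

/-- `Φ₂(λ) = a₂₁λ₁ + ∫ (1 - e^{-⟨λ,z⟩}) n₂(dz)`. -/
def mPhi2 (B : BranchingMechanism) (l : ℝ × ℝ) : ℝ :=
  B.a21 * l.1 + ∫ z, (1 - Real.exp (-(l.1 * z.1 + l.2 * z.2))) ∂B.n2


/-- `V : t ↦ V(t,λ)` is a continuous `[0,∞)²`-valued solution of the cumulant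
equations (3.8) with initial value `λ = l`. -/
def SolvesCumulant (B : BranchingMechanism) (l : ℝ × ℝ) (V : ℝ → ℝ × ℝ) : Prop :=
  ContinuousOn V (Ici 0) ∧
  (∀ t : ℝ, 0 ≤ t → 0 ≤ (V t).1 ∧ 0 ≤ (V t).2) ∧
  (∀ t : ℝ, 0 ≤ t →
    (V t).1 = l.1 + ∫ s in (0:ℝ)..t, mPhi1 B (V s) ∧
    (V t).2 = l.2 + ∫ s in (0:ℝ)..t, mPhi2 B (V s))

/-- `P` is the family of transition probabilities of the MSB-process with cumulant
`V`: each `P_t(x,·)` is a Borel probability measure on `𝕄` with Laplace transform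
`∫ e^{-⟨λ,y⟩} P_t(x,dy) = exp(-⟨x,V(t,λ)⟩)`. -/
def IsMSBTransition (V : ℝ → (ℝ × ℝ) → ℝ × ℝ)
    (P : ℝ → (ℝ × ℝ) → Measure (ℝ × ℝ)) : Prop :=
  ∀ t : ℝ, 0 ≤ t → ∀ x ∈ Mset,
    IsProbabilityMeasure (P t x) ∧ P t x Msetᶜ = 0 ∧
    ∀ l : ℝ × ℝ, 0 ≤ l.1 → 0 ≤ l.2 →
      ∫ y, Real.exp (-(l.1 * y.1 + l.2 * y.2)) ∂(P t x)
        = Real.exp (-(x.1 * (V t l).1 + x.2 * (V t l).2))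

/-- `π : t ↦ π(t,λ)` is a `[0,∞)²`-valued solution of the moment linear system
`dπ₁/dt = -a₁₁π₁ + π₂ ∫ z₂ n₁(dz)`,
`dπ₂/dt = a₂₁π₁ + ∫ (z₁π₁ + z₂π₂) n₂(dz)`, with `π(0,λ) = l`. -/
def SolvesMoment (B : BranchingMechanism) (l : ℝ × ℝ) (π : ℝ → ℝ × ℝ) : Prop :=
  π 0 = l ∧
  (∀ t : ℝ, 0 ≤ t → 0 ≤ (π t).1 ∧ 0 ≤ (π t).2) ∧
  (∀ t : ℝ, 0 ≤ t →
    HasDerivWithinAt (fun s => (π s).1)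
      (-B.a11 * (π t).1 + (π t).2 * ∫ z, z.2 ∂B.n1) (Ici 0) t ∧
    HasDerivWithinAt (fun s => (π s).2)
      (B.a21 * (π t).1 + ∫ z, (z.1 * (π t).1 + z.2 * (π t).2) ∂B.n2) (Ici 0) t)

/-- `Pc` is a coupling of the probability measures `μ` and `ν` on `ℝ²`. -/
def IsCoupling (Pc : Measure ((ℝ × ℝ) × (ℝ × ℝ))) (μ ν : Measure (ℝ × ℝ)) : Prop :=
  IsProbabilityMeasure Pc ∧ Pc.map Prod.fst = μ ∧ Pc.map Prod.snd = ν

/-- The immigration mechanism `Ψ(λ) = bλ₁ + ∫ (1 - e^{-⟨λ,z⟩}) m(dz)`. -/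
def mPsi (b : ℝ) (m : Measure (ℝ × ℝ)) (l : ℝ × ℝ) : ℝ :=
  b * l.1 + ∫ z, (1 - Real.exp (-(l.1 * z.1 + l.2 * z.2))) ∂m

/-- `m` is an admissible immigration measure: a σ-finite measure on `𝕄` not
charging the origin with `∫ (1∧z₁ + 1∧z₂) m(dz) < ∞`. -/
def IsImmigrationMeasure (m : Measure (ℝ × ℝ)) : Prop :=
  SigmaFinite m ∧ m Msetᶜ = 0 ∧ m {0} = 0 ∧
    ∫⁻ z, ENNReal.ofReal (min 1 z.1 + min 1 z.2) ∂m ≠ ⊤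

/-- `P` is the family of transition probabilities of the MSBI-process with
cumulant `V` and immigration mechanism `Ψ = mPsi b m`. -/
def IsMSBITransition (V : ℝ → (ℝ × ℝ) → ℝ × ℝ) (b : ℝ) (m : Measure (ℝ × ℝ))
    (P : ℝ → (ℝ × ℝ) → Measure (ℝ × ℝ)) : Prop :=
  ∀ t : ℝ, 0 ≤ t → ∀ x ∈ Mset,
    IsProbabilityMeasure (P t x) ∧ P t x Msetᶜ = 0 ∧
    ∀ l : ℝ × ℝ, 0 ≤ l.1 → 0 ≤ l.2 →
      ∫ y, Real.exp (-(l.1 * y.1 + l.2 * y.2)) ∂(P t x)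
        = Real.exp (-(x.1 * (V t l).1 + x.2 * (V t l).2)
            - ∫ s in (0:ℝ)..t, mPsi b m (V s l))

/-- Entries of the moment matrix `H`. -/
def H11 (B : BranchingMechanism) : ℝ := -B.a11
def H12 (B : BranchingMechanism) : ℝ := ∫ z, z.2 ∂B.n1
def H21 (B : BranchingMechanism) : ℝ := B.a21 + ∫ z, z.1 ∂B.n2
def H22 (B : BranchingMechanism) : ℝ := ∫ z, z.2 ∂B.n2

open scoped NNReal Topology unitInterval

/-- the kernel `q₁^{l₁} q₂^{l₂}` -/
def lker (l : ℝ≥0 × ℝ≥0) (q : I × I) : ℝ := (q.1 : ℝ) ^ (l.1 : ℝ) * (q.2 : ℝ) ^ (l.2 : ℝ)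

lemma lker_cont (l : ℝ≥0 × ℝ≥0) : Continuous (lker l) := by
  unfold lker
  refine Continuous.mul ?_ ?_
  · exact Continuous.rpow_const (by fun_prop) (fun _ => Or.inr l.1.2)
  · exact Continuous.rpow_const (by fun_prop) (fun _ => Or.inr l.2.2)

lemma lker_nonneg (l : ℝ≥0 × ℝ≥0) (q : I × I) : 0 ≤ lker l q :=
  mul_nonneg (Real.rpow_nonneg q.1.2.1 _) (Real.rpow_nonneg q.2.2.1 _)

lemma lker_le_one (l : ℝ≥0 × ℝ≥0) (q : I × I) : lker l q ≤ 1 :=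
  mul_le_one₀ (Real.rpow_le_one q.1.2.1 q.1.2.2 l.1.2) (Real.rpow_nonneg q.2.2.1 _)
    (Real.rpow_le_one q.2.2.1 q.2.2.2 l.2.2)

lemma lker_mul (l : ℝ≥0 × ℝ≥0) (q q' : I × I) : lker l (q * q') = lker l q * lker l q' := by
  unfold lker
  simp only [Prod.fst_mul, Prod.snd_mul, Icc.coe_mul]
  rw [Real.mul_rpow q.1.2.1 q'.1.2.1, Real.mul_rpow q.2.2.1 q'.2.2.1]
  ring

lemma lker_int (l : ℝ≥0 × ℝ≥0) (μ : Measure (I × I)) [IsFiniteMeasure μ] :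
    Integrable (lker l) μ := by
  refine Integrable.of_bound (lker_cont l).measurable.aestronglyMeasurable 1 ?_
  refine Eventually.of_forall fun q => ?_
  rw [Real.norm_of_nonneg (lker_nonneg l q)]
  exact lker_le_one l q

/-- `f` is a (possibly defective) Laplace transform. -/
def IsLap (f : ℝ≥0 × ℝ≥0 → ℝ) : Prop :=
  ∃ μ : ProbabilityMeasure (I × I), ∀ l, f l = ∫ q, lker l q ∂(μ : Measure (I × I))

lemma IsLap.nonneg {f} (h : IsLap f) (l) : 0 ≤ f l := by
  obtain ⟨μ, hμ⟩ := h
  rw [hμ]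
  exact integral_nonneg (lker_nonneg l)

lemma IsLap.le_one {f} (h : IsLap f) (l) : f l ≤ 1 := by
  obtain ⟨μ, hμ⟩ := h
  rw [hμ]
  calc _ ≤ ∫ q, (1:ℝ) ∂(μ : Measure (I × I)) :=
        integral_mono (lker_int l _) (integrable_const _) (lker_le_one l)
    _ = 1 := by simp

lemma IsLap.dirac (q : I × I) : IsLap (fun l => lker l q) :=
  ⟨⟨Measure.dirac q, inferInstance⟩, fun l => by simp⟩

lemma IsLap.one : IsLap (fun _ => 1) := by
  convert IsLap.dirac 1 using 2
  simp [lker]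

lemma IsLap.mul {f g} (hf : IsLap f) (hg : IsLap g) : IsLap (fun l => f l * g l) := by
  obtain ⟨μ, hμ⟩ := hf
  obtain ⟨ν, hν⟩ := hg
  have hm : Measurable (fun p : (I × I) × (I × I) => p.1 * p.2) :=
    (continuous_fst.mul continuous_snd).measurable
  refine ⟨⟨((μ : Measure (I × I)).prod ν).map (fun p => p.1 * p.2),
    Measure.isProbabilityMeasure_map hm.aemeasurable⟩, fun l => ?_⟩
  change f l * g l = ∫ q, lker l q ∂(((μ : Measure (I × I)).prod ν).map (fun p => p.1 * p.2))
  rw [hμ, hν, ← integral_prod_mul]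
  rw [integral_map hm.aemeasurable (lker_cont l).measurable.aestronglyMeasurable]
  simp only [lker_mul]

lemma IsLap.pow {f} (hf : IsLap f) (n : ℕ) : IsLap (fun l => f l ^ n) := by
  induction n with
  | zero => simpa using IsLap.one
  | succ n ih => simpa [pow_succ] using ih.mul hf

lemma IsLap.sum {ι : Type*} (s : Finset ι) (p : ι → ℝ) (hp : ∀ i ∈ s, 0 ≤ p i)
    (hs : ∑ i ∈ s, p i = 1) (F : ι → ℝ≥0 × ℝ≥0 → ℝ) (hF : ∀ i, IsLap (F i)) :
    IsLap (fun l => ∑ i ∈ s, p i * F i l) := by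
  choose μ hμ using hF
  have hprob : IsProbabilityMeasure (∑ i ∈ s, ENNReal.ofReal (p i) • (μ i : Measure (I × I))) := by
    constructor
    rw [Measure.finsetSum_apply]
    simp only [Measure.smul_apply, measure_univ, smul_eq_mul, mul_one]
    rw [← ENNReal.ofReal_sum_of_nonneg hp, hs, ENNReal.ofReal_one]
  refine ⟨⟨_, hprob⟩, fun l => ?_⟩
  simp only [ProbabilityMeasure.coe_mk]
  rw [integral_finsetSum_measure]
  · refine Finset.sum_congr rfl fun i hi => ?_
    rw [integral_smul_measure, ENNReal.toReal_ofReal (hp i hi), hμ, smul_eq_mul]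
  · intro i hi
    exact (lker_int l _).smul_measure ENNReal.ofReal_ne_top

lemma IsLap.convex {f g} (hf : IsLap f) (hg : IsLap g) {p : ℝ} (h0 : 0 ≤ p) (h1 : p ≤ 1) :
    IsLap (fun l => (1 - p) * f l + p * g l) := by
  have := IsLap.sum (Finset.univ : Finset Bool) (fun b => if b then p else 1 - p)
    (by intro i _; cases i <;> simp [h0, h1]) (by simp) (fun b => if b then g else f)
    (by intro b; cases b <;> simpa)
  convert this using 2
  simp
  ring

lemma IsLap.lim {F : ℕ → ℝ≥0 × ℝ≥0 → ℝ} {f} (hF : ∀ n, IsLap (F n))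
    (h : ∀ l, Tendsto (fun n => F n l) atTop (𝓝 (f l))) : IsLap f := by
  choose μ hμ using hF
  obtain ⟨ν, hν⟩ : ∃ ν, MapClusterPt ν atTop μ := exists_clusterPt_of_compactSpace _
  obtain ⟨U, hU, hUν⟩ := mapClusterPt_iff_ultrafilter.1 hν
  refine ⟨ν, fun l => ?_⟩
  rw [ProbabilityMeasure.tendsto_iff_forall_integral_tendsto] at hUν
  have h1 := hUν (BoundedContinuousFunction.mkOfCompact ⟨lker l, lker_cont l⟩)
  simp only [BoundedContinuousFunction.mkOfCompact_apply, ContinuousMap.coe_mk, ← hμ] at h1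
  exact tendsto_nhds_unique ((h l).mono_left hU) h1

lemma IsLap.cpoisson {f} (hf : IsLap f) {r : ℝ} (hr : 0 ≤ r) :
    IsLap (fun l => Real.exp (-(r * (1 - f l)))) := by
  obtain ⟨k, hk⟩ := exists_nat_ge r
  refine IsLap.lim (F := fun n l => ((1 - r / (n + k + 1 : ℕ)) * 1 + r / (n + k + 1 : ℕ) * f l) ^ (n + k + 1))
    (fun n => ?_) (fun l => ?_)
  · refine IsLap.pow (IsLap.convex IsLap.one hf (by positivity) ?_) _
    rw [div_le_one (by positivity)]
    push_cast
    linarith [(Nat.cast_nonneg n : (0:ℝ) ≤ n)]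
  · have := Real.tendsto_one_add_div_pow_exp (-(r * (1 - f l)))
    refine ((tendsto_add_atTop_iff_nat (k+1)).2 this).congr fun n => ?_
    congr 1
    simp only [add_assoc]
    ring

lemma IsLap.mix {Z : Type*} [MetricSpace Z] [SecondCountableTopology Z] [Nonempty Z]
    [MeasurableSpace Z] [BorelSpace Z]
    (ν : Measure Z) [IsFiniteMeasure ν] (F : Z → ℝ≥0 × ℝ≥0 → ℝ) (hF : ∀ z, IsLap (F z))
    (hc : ∀ l, Continuous (fun z => F z l)) :
    ∃ G, IsLap G ∧ ∀ l, ∫ z, F z l ∂ν = ν.real univ * G l := by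
  by_cases h0 : ν = 0
  · exact ⟨_, IsLap.one, fun l => by simp [h0]⟩
  have hM : 0 < ν.real univ := by
    rw [measureReal_def, ENNReal.toReal_pos_iff]
    exact ⟨by simpa [pos_iff_ne_zero] using h0, measure_lt_top _ _⟩
  refine ⟨fun l => (ν.real univ)⁻¹ * ∫ z, F z l ∂ν, ?_, fun l => by field_simp⟩
  obtain ⟨z0⟩ := ‹Nonempty Z›
  let g : ℕ → SimpleFunc Z Z := SimpleFunc.approxOn id measurable_id univ z0 (mem_univ _)
  refine IsLap.lim (F := fun n l => (ν.real univ)⁻¹ * ∫ z, F (g n z) l ∂ν) (fun n => ?_) (fun l => ?_)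
  · have : ∀ l, (ν.real univ)⁻¹ * ∫ z, F (g n z) l ∂ν
        = ∑ a ∈ (g n).range, ((ν.real univ)⁻¹ * ν.real (g n ⁻¹' {a})) * F a l := by
      intro l
      have h1 : ∀ z, F (g n z) l
          = ∑ a ∈ (g n).range, (g n ⁻¹' {a}).indicator (fun _ => F a l) z := by
        intro z
        rw [Finset.sum_eq_single (g n z)]
        · simp
        · intro a _ ha
          exact indicator_of_notMem (by simpa using ha.symm) _
        · intro h
          exact absurd (SimpleFunc.mem_range_self _ _) h
      simp_rw [h1]
      rw [integral_finsetSum, Finset.mul_sum]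
      · refine Finset.sum_congr rfl fun a _ => ?_
        rw [integral_indicator_const _ ((g n).measurableSet_fiber a), smul_eq_mul, mul_assoc]
      · intro a _
        exact (integrable_const _).indicator ((g n).measurableSet_fiber a)
    simp_rw [this]
    refine IsLap.sum _ _ (fun i _ => by positivity) ?_ _ hF
    rw [← Finset.mul_sum, sum_measureReal_preimage_singleton _
      (fun a _ => (g n).measurableSet_fiber a), SimpleFunc.coe_range, preimage_range]
    field_simp
  · refine Tendsto.const_mul _ ?_
    refine tendsto_integral_of_dominated_convergence (fun _ => 1) (fun n => ?_)
      (integrable_const _) (fun n => ?_) ?_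
    · exact (((hc l).measurable).comp (g n).measurable).aestronglyMeasurable
    · refine Eventually.of_forall fun z => ?_
      rw [Real.norm_of_nonneg ((hF _).nonneg l)]
      exact (hF _).le_one l
    · refine Eventually.of_forall fun z => ?_
      refine ((hc l).tendsto z).comp ?_
      exact SimpleFunc.tendsto_approxOn measurable_id (mem_univ _) (by simp)


lemma lap_unique_nn {μ ν : Measure (ℝ≥0 × ℝ≥0)} [IsFiniteMeasure μ] [IsFiniteMeasure ν]
    (h : ∀ l : ℝ≥0 × ℝ≥0, ∫ y, Real.exp (-(l.1 * y.1 + l.2 * y.2)) ∂μ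
      = ∫ y, Real.exp (-(l.1 * y.1 + l.2 * y.2)) ∂ν) : μ = ν := by
  let e : ℝ≥0 × ℝ≥0 → BoundedContinuousFunction (ℝ≥0 × ℝ≥0) ℝ := fun l =>
    BoundedContinuousFunction.ofNormedAddCommGroup
      (fun y => Real.exp (-(l.1 * y.1 + l.2 * y.2))) (by fun_prop) 1 (by
        intro y
        rw [Real.norm_of_nonneg (Real.exp_pos _).le, Real.exp_le_one_iff]
        simp only [Left.neg_nonpos_iff]
        positivity)
  have he : ∀ l y, e l y = Real.exp (-(l.1 * y.1 + l.2 * y.2)) := fun _ _ => rfl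
  let S : Submonoid (BoundedContinuousFunction (ℝ≥0 × ℝ≥0) ℝ) :=
    { carrier := range e
      one_mem' := ⟨0, by ext y; simp [he]⟩
      mul_mem' := by
        rintro _ _ ⟨l, rfl⟩ ⟨l', rfl⟩
        refine ⟨l + l', ?_⟩
        ext y
        simp only [he, BoundedContinuousFunction.mul_apply, ← Real.exp_add, Prod.fst_add,
          Prod.snd_add, NNReal.coe_add]
        congr 1
        ring }
  let A : StarSubalgebra ℝ (BoundedContinuousFunction (ℝ≥0 × ℝ≥0) ℝ) :=
    { toSubalgebra := Algebra.adjoin ℝ (S : Set _)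
      star_mem' := by
        intro a ha
        have : star a = a := by ext y; simp
        rwa [this] }
  refine ext_of_forall_mem_subalgebra_integral_eq_of_polish (A := A) ?_ ?_
  · intro x y hxy
    have key : ∀ l, e l ∈ A := fun l => Algebra.subset_adjoin ⟨l, rfl⟩
    by_cases h1 : x.1 = y.1
    · have h2 : x.2 ≠ y.2 := fun h => hxy (Prod.ext h1 h)
      refine ⟨e (0, 1), ⟨_, ⟨e (0,1), key _, rfl⟩, rfl⟩, ?_⟩
      simp [he, h2]
    · refine ⟨e (1, 0), ⟨_, ⟨e (1,0), key _, rfl⟩, rfl⟩, ?_⟩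
      simp [he, h1]
  · intro g hg
    have hg' : g ∈ Submodule.span ℝ (S : Set (BoundedContinuousFunction (ℝ≥0 × ℝ≥0) ℝ)) := by
      have : g ∈ Subalgebra.toSubmodule (Algebra.adjoin ℝ (S : Set _)) := hg
      rwa [Algebra.adjoin_eq_span, Submonoid.closure_eq] at this
    clear hg
    induction hg' using Submodule.span_induction with
    | mem x hx =>
      obtain ⟨l, rfl⟩ := hx
      exact h l
    | zero => simp
    | add x y _ _ hx hy =>
      simp only [BoundedContinuousFunction.coe_add, Pi.add_apply]
      rw [integral_add (x.integrable _) (y.integrable _),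
        integral_add (x.integrable _) (y.integrable _), hx, hy]
    | smul c x _ hx =>
      simp only [BoundedContinuousFunction.coe_smul]
      rw [integral_smul, integral_smul, hx]

def quad : Set (ℝ × ℝ) := {z | 0 ≤ z.1 ∧ 0 ≤ z.2}

lemma lap_unique {μ ν : Measure (ℝ × ℝ)} [IsFiniteMeasure μ] [IsFiniteMeasure ν]
    (hμ : ∀ᵐ z ∂μ, z ∈ quad) (hν : ∀ᵐ z ∂ν, z ∈ quad)
    (h : ∀ l : ℝ × ℝ, 0 ≤ l.1 → 0 ≤ l.2 → ∫ y, Real.exp (-(l.1 * y.1 + l.2 * y.2)) ∂μ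
      = ∫ y, Real.exp (-(l.1 * y.1 + l.2 * y.2)) ∂ν) : μ = ν := by
  let p : ℝ × ℝ → ℝ≥0 × ℝ≥0 := fun z => (z.1.toNNReal, z.2.toNNReal)
  let c : ℝ≥0 × ℝ≥0 → ℝ × ℝ := fun z => (z.1, z.2)
  have hp : Measurable p := by fun_prop
  have hc : Measurable c := by fun_prop
  have hcp : ∀ z ∈ quad, c (p z) = z := by
    rintro ⟨a, b⟩ ⟨ha, hb⟩
    simp only at ha hb
    simp [c, p, ha, hb]
  have hback : ∀ ρ : Measure (ℝ × ℝ), (∀ᵐ z ∂ρ, z ∈ quad) → (ρ.map p).map c = ρ := by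
    intro ρ hρ
    rw [Measure.map_map hc hp]
    have : c ∘ p =ᵐ[ρ] id := hρ.mono fun z hz => hcp z hz
    rw [Measure.map_congr this, Measure.map_id]
  have hint : ∀ ρ : Measure (ℝ × ℝ), (∀ᵐ z ∂ρ, z ∈ quad) → ∀ l : ℝ≥0 × ℝ≥0,
      ∫ y, Real.exp (-(l.1 * y.1 + l.2 * y.2)) ∂(ρ.map p) =
      ∫ y, Real.exp (-(l.1 * y.1 + l.2 * y.2)) ∂ρ := by
    intro ρ hρ l
    rw [integral_map hp.aemeasurable (by fun_prop)]
    refine integral_congr_ae (hρ.mono fun z hz => ?_)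
    simp [p, hz.1, hz.2]
  rw [← hback μ hμ, ← hback ν hν]
  congr 1
  refine lap_unique_nn fun l => ?_
  rw [hint μ hμ, hint ν hν]
  exact h ((l.1 : ℝ), (l.2 : ℝ)) l.1.2 l.2.2

lemma IsLap.toMeasure {f} (hf : IsLap f)
    (h1 : Tendsto (fun n : ℕ => f (1 / ((n : ℝ≥0) + 1), 1 / ((n : ℝ≥0) + 1))) atTop (𝓝 1)) :
    ∃ Q : Measure (ℝ × ℝ), IsProbabilityMeasure Q ∧ (∀ᵐ z ∂Q, z ∈ quad) ∧
      ∀ l : ℝ≥0 × ℝ≥0, ∫ y, Real.exp (-(l.1 * y.1 + l.2 * y.2)) ∂Q = f l := by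
  obtain ⟨μ, hμ⟩ := hf
  let p : I × I → ℝ × ℝ := fun q => (-Real.log q.1, -Real.log q.2)
  have hp : Measurable p := by fun_prop
  let T : Set (I × I) := {q | (q.1 : ℝ) = 0 ∨ (q.2 : ℝ) = 0}
  have hT : MeasurableSet T := by
    refine MeasurableSet.union ?_ ?_
    · exact measurableSet_eq_fun (f := fun q : I × I => (q.1:ℝ)) (g := fun _ => (0:ℝ)) (by fun_prop) (by fun_prop)
    · exact measurableSet_eq_fun (f := fun q : I × I => (q.2:ℝ)) (g := fun _ => (0:ℝ)) (by fun_prop) (by fun_prop)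
  have hTle : ∀ n : ℕ, f (1 / ((n : ℝ≥0) + 1), 1 / ((n : ℝ≥0) + 1)) ≤ (μ : Measure (I × I)).real Tᶜ := by
    intro n
    rw [hμ, ← integral_indicator_one hT.compl]
    refine integral_mono (lker_int _ _) ((integrable_const 1).indicator hT.compl) fun q => ?_
    by_cases hq : q ∈ T
    · rw [indicator_of_notMem (by simpa using hq)]
      have hne : (1 / ((n : ℝ) + 1)) ≠ 0 := by positivity
      rcases hq with hq | hq
      · simp only [lker, hq]
        push_cast
        rw [Real.zero_rpow hne, zero_mul]
      · simp only [lker, hq]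
        push_cast
        rw [Real.zero_rpow hne, mul_zero]
    · rw [indicator_of_mem (by simpa using hq)]
      exact lker_le_one _ q
  have hT1 : 1 ≤ (μ : Measure (I × I)).real Tᶜ := le_of_tendsto' h1 hTle
  have hT0 : (μ : Measure (I × I)) T = 0 := by
    have h2 := measureReal_compl (μ := (μ : Measure (I × I))) hT
    rw [probReal_univ] at h2
    have h3 : (μ : Measure (I × I)).real T = 0 := by
      have : 0 ≤ (μ : Measure (I × I)).real T := measureReal_nonneg
      linarith
    rwa [measureReal_eq_zero_iff] at h3
  have hTae : ∀ᵐ q ∂(μ : Measure (I × I)), q ∉ T := by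
    rw [ae_iff]; simpa using hT0
  refine ⟨(μ : Measure (I × I)).map p, Measure.isProbabilityMeasure_map hp.aemeasurable, ?_, ?_⟩
  · have hq : MeasurableSet quad := (measurableSet_le measurable_const measurable_fst).inter
      (measurableSet_le measurable_const measurable_snd)
    refine (ae_map_iff (p := fun z => z ∈ quad) hp.aemeasurable hq).2 ?_
    refine Eventually.of_forall fun q => ⟨?_, ?_⟩
    · simpa [p] using Real.log_nonpos q.1.2.1 q.1.2.2
    · simpa [p] using Real.log_nonpos q.2.2.1 q.2.2.2
  · intro l
    rw [integral_map hp.aemeasurable (by fun_prop), hμ]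
    refine integral_congr_ae (hTae.mono fun q hq => ?_)
    have ha : (0:ℝ) < q.1 := lt_of_le_of_ne q.1.2.1 fun h => hq (Or.inl h.symm)
    have hb : (0:ℝ) < q.2 := lt_of_le_of_ne q.2.2.1 fun h => hq (Or.inr h.symm)
    simp only [p, lker]
    rw [Real.rpow_def_of_pos ha, Real.rpow_def_of_pos hb, ← Real.exp_add]
    congr 1
    ring


lemma gronwall_disc {a : ℕ → ℝ} {h A C : ℝ} (hh : 0 ≤ h) (hA : 0 ≤ A) (hC : 0 ≤ C)
    (h0 : 0 ≤ a 0) (n : ℕ) (hs : ∀ j < n, a (j+1) ≤ (1 + h * A) * a j + h * C) :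
    a n ≤ (a 0 + n * h * C) * Real.exp (A * (n * h)) := by
  induction n with
  | zero => simp
  | succ n ih =>
    have ih := ih fun j hj => hs j (hj.trans n.lt_succ_self)
    have h1 := hs n n.lt_succ_self
    have h2 : 1 + h * A ≤ Real.exp (h * A) := by linarith [Real.add_one_le_exp (h * A)]
    have h3 : (1 + h * A) * a n ≤ (1 + h * A) * ((a 0 + n * h * C) * Real.exp (A * (n * h))) :=
      mul_le_mul_of_nonneg_left ih (by positivity)
    have h4 : (1 + h * A) * ((a 0 + n * h * C) * Real.exp (A * (n * h)))
        ≤ Real.exp (h * A) * ((a 0 + n * h * C) * Real.exp (A * (n * h))) :=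
      mul_le_mul_of_nonneg_right h2 (by positivity)
    have h5 : Real.exp (A * ((n + 1 : ℕ) * h)) = Real.exp (h * A) * Real.exp (A * (n * h)) := by
      rw [← Real.exp_add]; congr 1; push_cast; ring
    have h6 : 1 ≤ Real.exp (A * ((n + 1 : ℕ) * h)) := Real.one_le_exp (by positivity)
    have h7 : h * C ≤ h * C * Real.exp (A * ((n + 1 : ℕ) * h)) :=
      le_mul_of_one_le_right (by positivity) h6
    calc a (n+1) ≤ Real.exp (h * A) * ((a 0 + n * h * C) * Real.exp (A * (n * h)))
          + h * C * Real.exp (A * ((n + 1 : ℕ) * h)) := by linarith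
      _ = _ := by rw [h5]; push_cast; ring

lemma euler_err {G G' : ℝ × ℝ → ℝ × ℝ} {D : Set (ℝ × ℝ)} {L M δ T h : ℝ} {n : ℕ}
    (hL : 0 ≤ L) (hM : 0 ≤ M) (hδ : 0 ≤ δ) (hh : 0 ≤ h) (hT : n * h = T)
    (hG : ∀ x ∈ D, ∀ y ∈ D, ‖G x - G y‖ ≤ L * ‖x - y‖)
    (hG' : ∀ x ∈ D, ‖G' x - G x‖ ≤ δ)
    {U : ℝ → ℝ × ℝ} (hU : ∀ t ∈ Icc 0 T, U t ∈ D) (hUc : ContinuousOn U (Icc 0 T))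
    (hUd : ∀ t ∈ Ico 0 T, HasDerivWithinAt U (G (U t)) (Ici t) t)
    (hUM : ∀ t ∈ Icc 0 T, ‖G (U t)‖ ≤ M)
    {x : ℕ → ℝ × ℝ} (hx0 : x 0 = U 0) (hxD : ∀ j < n, x j ∈ D)
    (hx : ∀ j < n, x (j+1) = x j + h • G' (x j)) :
    ‖x n - U T‖ ≤ T * (δ + L * M * h) * Real.exp (L * T) := by
  have key := gronwall_disc (a := fun j => ‖x j - U (j * h)‖) (A := L) (C := δ + L * M * h)
    hh hL (by positivity) (norm_nonneg _) n ?_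
  · simp only [hT, CharP.cast_eq_zero, zero_mul, hx0, sub_self, norm_zero, zero_add] at key
    exact key
  intro j hj
  have hjn : ((j:ℝ) + 1) ≤ n := by exact_mod_cast hj
  have ha0 : 0 ≤ (j:ℝ) * h := by positivity
  have hbT : ((j:ℝ) + 1) * h ≤ T := by rw [← hT]; gcongr
  have hab : (j:ℝ) * h ≤ (j + 1) * h := by nlinarith
  have hsub : Icc ((j:ℝ) * h) ((j + 1) * h) ⊆ Icc 0 T := Icc_subset_Icc ha0 hbT
  have hsub' : Ico ((j:ℝ) * h) ((j + 1) * h) ⊆ Ico 0 T := Ico_subset_Ico ha0 hbT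
  have hmem : (j:ℝ) * h ∈ Icc 0 T := hsub ⟨le_rfl, hab⟩
  -- Lipschitz in time
  have hlip : ∀ t ∈ Icc ((j:ℝ) * h) ((j + 1) * h), ‖U t - U (j * h)‖ ≤ M * (t - j * h) :=
    norm_image_sub_le_of_norm_deriv_right_le_segment (hUc.mono hsub)
      (fun t ht => hUd t (hsub' ht)) (fun t ht => hUM t (hsub (Ico_subset_Icc_self ht)))
  have hcons := norm_image_sub_le_of_norm_deriv_right_le_segment
    (f := fun t => U t - t • G (U (j * h))) (f' := fun t => G (U t) - G (U (j * h)))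
    (C := L * (M * h)) (a := (j:ℝ) * h) (b := (j + 1) * h)
    ((hUc.mono hsub).sub (by fun_prop))
    (fun t ht => by
      have := (hUd t (hsub' ht)).sub
        ((hasDerivAt_id t).smul_const (G (U (j * h)))).hasDerivWithinAt
      simp only [id_eq, one_smul] at this
      exact this)
    (fun t ht => by
      have htI := Ico_subset_Icc_self ht
      refine (hG _ (hU t (hsub htI)) _ (hU _ hmem)).trans ?_
      refine mul_le_mul_of_nonneg_left ((hlip t htI).trans ?_) hL
      refine mul_le_mul_of_nonneg_left ?_ hM
      have := ht.2
      linarith)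
    ((j + 1) * h) ⟨hab, le_rfl⟩
  have hcons' : ‖U ((j + 1) * h) - U (j * h) - h • G (U (j * h))‖ ≤ L * M * h * h := by
    have e1 : U ((j + 1) * h) - U (j * h) - h • G (U (j * h)) =
      (U ((j + 1) * h) - (((j:ℝ) + 1) * h) • G (U (j * h))) -
        (U (j * h) - ((j:ℝ) * h) • G (U (j * h))) := by
      have : (((j:ℝ) + 1) * h) • G (U (j * h)) = ((j:ℝ) * h) • G (U (j * h)) + h • G (U (j * h)) := by
        rw [← add_smul]; congr 1; ring
      rw [this]; abel
    rw [e1]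
    refine hcons.trans (le_of_eq ?_)
    ring
  rw [hx j hj]
  have e2 : x j + h • G' (x j) - U (((j + 1 : ℕ):ℝ) * h) =
      (x j - U (j * h)) + h • (G' (x j) - G (x j)) + h • (G (x j) - G (U (j * h)))
        - (U ((j + 1) * h) - U (j * h) - h • G (U (j * h))) := by
    push_cast
    simp only [smul_sub]
    abel
  rw [e2]
  have n1 : ‖h • (G' (x j) - G (x j))‖ ≤ h * δ := by
    rw [norm_smul, Real.norm_of_nonneg hh]
    exact mul_le_mul_of_nonneg_left (hG' _ (hxD j hj)) hh
  have n2 : ‖h • (G (x j) - G (U (j * h)))‖ ≤ h * (L * ‖x j - U (j * h)‖) := by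
    rw [norm_smul, Real.norm_of_nonneg hh]
    exact mul_le_mul_of_nonneg_left (hG _ (hxD j hj) _ (hU _ hmem)) hh
  calc _ ≤ ‖x j - U (j * h)‖ + h * δ + h * (L * ‖x j - U (j * h)‖) + L * M * h * h := by
        refine (norm_sub_le _ _).trans (add_le_add ?_ hcons')
        refine (norm_add_le _ _).trans (add_le_add ?_ n2)
        exact (norm_add_le _ _).trans (add_le_add le_rfl n1)
    _ = _ := by ring

/-- `e^{-z₁ v} w^{z₂}` -/
def Fz (z : ℝ≥0 × ℕ) (v w : ℝ) : ℝ := Real.exp (-(z.1 * v)) * w ^ z.2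

lemma Fz_cont (v w : ℝ) : Continuous (fun z => Fz z v w) := by
  unfold Fz
  refine Continuous.mul (by fun_prop) ?_
  exact (continuous_of_discreteTopology (f := fun n : ℕ => w ^ n)).comp continuous_snd

lemma Fz_nonneg (z : ℝ≥0 × ℕ) {v w : ℝ} (hw : 0 ≤ w) : 0 ≤ Fz z v w := by
  unfold Fz; positivity

lemma Fz_le_one (z : ℝ≥0 × ℕ) {v w : ℝ} (hv : 0 ≤ v) (hw : 0 ≤ w) (hw1 : w ≤ 1) :
    Fz z v w ≤ 1 := by
  unfold Fz
  refine mul_le_one₀ ?_ (by positivity) (pow_le_one₀ hw hw1)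
  rw [Real.exp_le_one_iff, Left.neg_nonpos_iff]
  positivity

lemma Fz_int (ν : Measure (ℝ≥0 × ℕ)) [IsFiniteMeasure ν] {v w : ℝ} (hv : 0 ≤ v) (hw : 0 ≤ w)
    (hw1 : w ≤ 1) : Integrable (fun z => Fz z v w) ν := by
  refine Integrable.of_bound (Fz_cont v w).measurable.aestronglyMeasurable 1 ?_
  refine Eventually.of_forall fun z => ?_
  rw [Real.norm_of_nonneg (Fz_nonneg z hw)]
  exact Fz_le_one z hv hw hw1

def Gapp (c : ℝ) (ν1 ν2 : Measure (ℝ≥0 × ℕ)) (x : ℝ × ℝ) : ℝ × ℝ :=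
  (-c * x.1 + ∫ z, (1 - Fz z x.1 x.2) ∂ν1, ∫ z, (Fz z x.1 x.2 - x.2) ∂ν2)

def GoodLap (v w : ℝ≥0 × ℝ≥0 → ℝ) : Prop :=
  (∀ θ : ℝ, 0 ≤ θ → IsLap (fun l => Real.exp (-(θ * v l)))) ∧ IsLap w ∧ ∀ l, 0 ≤ v l

lemma GoodLap.fz {v w} (h : GoodLap v w) (z : ℝ≥0 × ℕ) : IsLap (fun l => Fz z (v l) (w l)) :=
  (h.1 z.1 z.1.2).mul (h.2.1.pow z.2)

lemma GoodLap.step {X : ℝ≥0 × ℝ≥0 → ℝ × ℝ} (hX : GoodLap (fun l => (X l).1) (fun l => (X l).2))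
    {c h : ℝ} (hh : 0 ≤ h) {ν1 ν2 : Measure (ℝ≥0 × ℕ)} [IsFiniteMeasure ν1] [IsFiniteMeasure ν2]
    (hc : h * c ≤ 1) (hN : h * ν2.real univ ≤ 1) :
    GoodLap (fun l => (X l + h • Gapp c ν1 ν2 (X l)).1) (fun l => (X l + h • Gapp c ν1 ν2 (X l)).2) := by
  have hv := hX.2.2
  have hw0 := hX.2.1.nonneg
  have hw1 := hX.2.1.le_one
  obtain ⟨G1, hG1, e1⟩ := IsLap.mix ν1 (fun z l => Fz z (X l).1 (X l).2) hX.fz (fun l => Fz_cont _ _)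
  obtain ⟨G2, hG2, e2⟩ := IsLap.mix ν2 (fun z l => Fz z (X l).1 (X l).2) hX.fz (fun l => Fz_cont _ _)
  have i1 : ∀ l, (X l + h • Gapp c ν1 ν2 (X l)).1 =
      (1 - h * c) * (X l).1 + h * ν1.real univ * (1 - G1 l) := by
    intro l
    simp only [Gapp, Prod.fst_add, Prod.smul_fst, smul_eq_mul]
    rw [integral_sub (integrable_const _) (Fz_int ν1 (hv l) (hw0 l) (hw1 l)), e1]
    simp
    ring
  have i2 : ∀ l, (X l + h • Gapp c ν1 ν2 (X l)).2 =
      (1 - h * ν2.real univ) * (X l).2 + h * ν2.real univ * G2 l := by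
    intro l
    simp only [Gapp, Prod.snd_add, Prod.smul_snd, smul_eq_mul]
    rw [integral_sub (Fz_int ν2 (hv l) (hw0 l) (hw1 l)) (integrable_const _), e2]
    simp
    ring
  refine ⟨fun θ hθ => ?_, ?_, fun l => ?_⟩
  · have := (hX.1 (θ * (1 - h * c)) (mul_nonneg hθ (by linarith))).mul
      (hG1.cpoisson (r := θ * (h * ν1.real univ)) (by positivity))
    convert this using 2 with l
    simp only [i1]
    rw [← Real.exp_add]
    congr 1
    ring
  · simp_rw [i2]
    exact hX.2.1.convex hG2 (by positivity) hN
  · simp only [i1]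
    have := hG1.le_one l
    have := hv l
    refine add_nonneg (mul_nonneg (by linarith) this) (mul_nonneg (by positivity) (by linarith))

def schm (c h : ℝ) (ν1 ν2 : Measure (ℝ≥0 × ℕ)) (x : ℝ × ℝ) : ℕ → ℝ × ℝ
  | 0 => x
  | j + 1 => schm c h ν1 ν2 x j + h • Gapp c ν1 ν2 (schm c h ν1 ν2 x j)

def lam0 (l : ℝ≥0 × ℝ≥0) : ℝ × ℝ := ((l.1 : ℝ), Real.exp (-(l.2 : ℝ)))

lemma GoodLap.init : GoodLap (fun l => (lam0 l).1) (fun l => (lam0 l).2) := by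
  have key : ∀ θ : ℝ, 0 ≤ θ → ∃ q : I, (q : ℝ) = Real.exp (-θ) := fun θ hθ =>
    ⟨⟨Real.exp (-θ), (Real.exp_pos _).le, by simpa using hθ⟩, rfl⟩
  refine ⟨fun θ hθ => ?_, ?_, fun l => l.1.2⟩
  · obtain ⟨q, hq⟩ := key θ hθ
    convert IsLap.dirac (q, 1) using 2 with l
    simp only [lam0, lker, hq, Icc.coe_one, Real.one_rpow, mul_one, ← Real.exp_mul]
    congr 1; ring
  · obtain ⟨q, hq⟩ := key 1 zero_le_one
    convert IsLap.dirac (1, q) using 2 with l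
    simp only [lam0, lker, hq, Icc.coe_one, Real.one_rpow, one_mul, ← Real.exp_mul]
    congr 1; ring

lemma GoodLap.schm {c h : ℝ} (hh : 0 ≤ h) {ν1 ν2 : Measure (ℝ≥0 × ℕ)} [IsFiniteMeasure ν1]
    [IsFiniteMeasure ν2] (hc : h * c ≤ 1) (hN : h * ν2.real univ ≤ 1) (j : ℕ) :
    GoodLap (fun l => (schm c h ν1 ν2 (lam0 l) j).1) (fun l => (schm c h ν1 ν2 (lam0 l) j).2) := by
  induction j with
  | zero => exact GoodLap.init
  | succ j ih => exact ih.step hh hc hN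

lemma exists_lap {G : ℝ × ℝ → ℝ × ℝ}
    (hGL : ∀ R : ℝ, 0 ≤ R → ∃ L : ℝ, 0 ≤ L ∧ ∀ x ∈ Icc 0 R ×ˢ Icc 0 1, ∀ y ∈ Icc 0 R ×ˢ Icc 0 1,
      ‖G x - G y‖ ≤ L * ‖x - y‖)
    (c : ℕ → ℝ) (ν1 ν2 : ℕ → Measure (ℝ≥0 × ℕ)) [∀ k, IsFiniteMeasure (ν1 k)]
    [∀ k, IsFiniteMeasure (ν2 k)]
    (happ : ∀ R : ℝ, 0 ≤ R → ∃ δ : ℕ → ℝ, (∀ k, 0 ≤ δ k) ∧ Tendsto δ atTop (𝓝 0) ∧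
      ∀ k, ∀ x ∈ Icc 0 R ×ˢ Icc 0 1, ‖Gapp (c k) (ν1 k) (ν2 k) x - G x‖ ≤ δ k)
    {A C : ℝ} (hA : 0 ≤ A) (hC : 0 ≤ C)
    (hgrow : ∀ k, ∀ x : ℝ × ℝ, 0 ≤ x.1 → 0 ≤ x.2 → x.2 ≤ 1 →
      (Gapp (c k) (ν1 k) (ν2 k) x).1 ≤ A * x.1 + C)
    {T : ℝ} (hT : 0 ≤ T) (U : ℝ≥0 × ℝ≥0 → ℝ → ℝ × ℝ)
    (hU0 : ∀ l, U l 0 = lam0 l)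
    (hUc : ∀ l, ContinuousOn (U l) (Icc 0 T))
    (hUd : ∀ l, ∀ t ∈ Ico 0 T, HasDerivWithinAt (U l) (G (U l t)) (Ici t) t)
    (hU : ∀ l, ∀ t ∈ Icc 0 T, 0 ≤ (U l t).1 ∧ 0 ≤ (U l t).2 ∧ (U l t).2 ≤ 1)
    (u1 : ℝ) (hu1 : 0 ≤ u1) (u2 : ℕ) :
    IsLap (fun l => Real.exp (-(u1 * (U l T).1)) * (U l T).2 ^ u2) := by
  -- number of steps
  have hn : ∀ k : ℕ, ∃ n : ℕ, 0 < n ∧ k ≤ n ∧ T / n * c k ≤ 1 ∧ T / n * (ν2 k).real univ ≤ 1 := by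
    intro k
    obtain ⟨n, hn⟩ := exists_nat_ge (max (T * c k) (T * (ν2 k).real univ))
    have hpos : (0:ℝ) < (n + k + 1 : ℕ) := by positivity
    have hle : (n:ℝ) ≤ (n + k + 1 : ℕ) := by exact_mod_cast (by omega)
    refine ⟨n + k + 1, by omega, by omega, ?_, ?_⟩
    · rw [div_mul_eq_mul_div, div_le_one hpos]
      exact ((le_max_left _ _).trans hn).trans hle
    · rw [div_mul_eq_mul_div, div_le_one hpos]
      exact ((le_max_right _ _).trans hn).trans hle
  choose n hn0 hnk hnc hnN using hn
  have hh : ∀ k, 0 ≤ T / n k := fun k => by positivity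
  have hnT : ∀ k, n k * (T / n k) = T := fun k => by
    have : (n k : ℝ) ≠ 0 := by exact_mod_cast (hn0 k).ne'
    field_simp
  have hh0 : Tendsto (fun k => T / (n k : ℝ)) atTop (𝓝 0) := by
    refine Tendsto.const_div_atTop ?_ T
    exact tendsto_natCast_atTop_atTop.comp (tendsto_atTop_mono hnk tendsto_id)
  have good := fun k j => GoodLap.schm (c := c k) (ν1 := ν1 k) (ν2 := ν2 k) (hh k) (hnc k) (hnN k) j
  let X : ℕ → ℝ≥0 × ℝ≥0 → ℕ → ℝ × ℝ := fun k l j => schm (c k) (T / n k) (ν1 k) (ν2 k) (lam0 l) j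
  have hlim : ∀ l, Tendsto (fun k => X k l (n k)) atTop (𝓝 (U l T)) := by
    intro l
    have hl0 : (0:ℝ) ≤ l.1 := l.1.2
    -- a priori bound
    have hb1 : ∀ k, ∀ j ≤ n k, (X k l j).1 ≤ ((l.1:ℝ) + T * C) * Real.exp (A * T) := by
      intro k j hj
      have h1 := gronwall_disc (a := fun j => (X k l j).1) (h := T / n k) (hh k) hA hC
        (by exact l.1.2) j (fun i _ => by
          have := hgrow k (X k l i) ((good k i).2.2 l) ((good k i).2.1.nonneg l)
            ((good k i).2.1.le_one l)
          change (X k l i).1 + T / n k * (Gapp (c k) (ν1 k) (ν2 k) (X k l i)).1 ≤ _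
          have := mul_le_mul_of_nonneg_left this (hh k)
          linarith)
      have hjT : j * (T / n k) ≤ T := by
        calc j * (T / n k) ≤ n k * (T / n k) := by
              refine mul_le_mul_of_nonneg_right ?_ (hh k)
              exact_mod_cast hj
          _ = T := hnT k
      refine h1.trans ?_
      change ((l.1:ℝ) + _) * _ ≤ _
      gcongr
    obtain ⟨R2, hR2⟩ := (isCompact_Icc.image_of_continuousOn (hUc l)).isBounded.exists_norm_le
    have hRU : ∀ t ∈ Icc 0 T, (U l t).1 ≤ R2 := fun t ht =>
      (le_abs_self _).trans ((norm_fst_le (U l t)).trans (hR2 _ (mem_image_of_mem _ ht)))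
    set R := max (((l.1:ℝ) + T * C) * Real.exp (A * T)) R2 with hRdef
    have hR : 0 ≤ R := le_max_of_le_left (by positivity)
    obtain ⟨L, hL, hLip⟩ := hGL R hR
    obtain ⟨δ, hδ0, hδ, hδG⟩ := happ R hR
    have hUD : ∀ t ∈ Icc 0 T, U l t ∈ Icc 0 R ×ˢ Icc (0:ℝ) 1 := fun t ht =>
      ⟨⟨(hU l t ht).1, (hRU t ht).trans (le_max_right _ _)⟩, (hU l t ht).2⟩
    have hM : ∀ t ∈ Icc 0 T, ‖G (U l t)‖ ≤ ‖G (U l 0)‖ + L * (R2 + R2) := by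
      intro t ht
      have h0 : (0:ℝ) ∈ Icc 0 T := ⟨le_rfl, hT⟩
      have e1 := hLip _ (hUD t ht) _ (hUD 0 h0)
      have e2 : ‖U l t - U l 0‖ ≤ R2 + R2 := (norm_sub_le _ _).trans
        (add_le_add (hR2 _ (mem_image_of_mem _ ht)) (hR2 _ (mem_image_of_mem _ h0)))
      have e3 : ‖G (U l t)‖ ≤ ‖G (U l 0)‖ + ‖G (U l t) - G (U l 0)‖ := by
        have := norm_add_le (G (U l 0)) (G (U l t) - G (U l 0))
        simpa using this
      have := mul_le_mul_of_nonneg_left e2 hL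
      linarith
    have hM0 : 0 ≤ ‖G (U l 0)‖ + L * (R2 + R2) := (norm_nonneg _).trans (hM 0 ⟨le_rfl, hT⟩)
    rw [tendsto_iff_norm_sub_tendsto_zero]
    refine squeeze_zero (fun _ => norm_nonneg _) (fun k => euler_err hL hM0 (hδ0 k) (hh k) (hnT k)
      hLip (hδG k) hUD (hUc l) (hUd l) hM (x := X k l) (hU0 l).symm (fun j hj => ?_)
      (fun j _ => rfl)) ?_
    · exact ⟨⟨(good k j).2.2 l, (hb1 k j hj.le).trans (le_max_left _ _)⟩,
        (good k j).2.1.nonneg l, (good k j).2.1.le_one l⟩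
    · have : Tendsto (fun k => T * (δ k + L * (‖G (U l 0)‖ + L * (R2 + R2)) * (T / n k)) * Real.exp (L * T))
          atTop (𝓝 (T * (0 + L * (‖G (U l 0)‖ + L * (R2 + R2)) * 0) * Real.exp (L * T))) :=
        ((hδ.add (hh0.const_mul _)).const_mul _).mul_const _
      simpa using this
  refine IsLap.lim (F := fun k l => Real.exp (-(u1 * (X k l (n k)).1)) * (X k l (n k)).2 ^ u2)
    (fun k => ?_) (fun l => ?_)
  · exact ((good k (n k)).1 u1 hu1).mul ((good k (n k)).2.1.pow u2)
  · have h1 := (hlim l)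
    have hc : Continuous (fun x : ℝ × ℝ => Real.exp (-(u1 * x.1)) * x.2 ^ u2) := by fun_prop
    exact (hc.tendsto _).comp h1


def I1 (z : ℝ≥0 × ℕ) (v w : ℝ) : ℝ := Fz z v w - 1 + v * z.1
def I2 (z : ℝ≥0 × ℕ) (v w : ℝ) : ℝ := Fz z v w - w
def g1 (z : ℝ≥0 × ℕ) : ℝ := min (z.1 : ℝ) ((z.1 : ℝ) ^ 2) + z.2
def g2 (z : ℝ≥0 × ℕ) : ℝ := z.1 + |(z.2 : ℝ) - 1|

lemma I1_cont (v w : ℝ) : Continuous (fun z => I1 z v w) := by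
  have := Fz_cont v w
  unfold I1; fun_prop
lemma I2_cont (v w : ℝ) : Continuous (fun z => I2 z v w) := by
  have := Fz_cont v w
  unfold I2; fun_prop
lemma castn_cont : Continuous (fun z : ℝ≥0 × ℕ => (z.2 : ℝ)) :=
  (continuous_of_discreteTopology (f := fun n : ℕ => (n : ℝ))).comp continuous_snd
lemma g1_cont : Continuous g1 := by
  have := castn_cont
  unfold g1; fun_prop
lemma g2_cont : Continuous g2 := by
  have := castn_cont
  unfold g2; fun_prop
lemma g1_nonneg (z) : 0 ≤ g1 z := by unfold g1; positivity
lemma g2_nonneg (z) : 0 ≤ g2 z := by unfold g2; positivity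

lemma pow_lip {w w' : ℝ} (hw : w ∈ Icc (0:ℝ) 1) (hw' : w' ∈ Icc (0:ℝ) 1) (n : ℕ) :
    |w ^ n - w' ^ n| ≤ n * |w - w'| := by
  induction n with
  | zero => simp
  | succ n ih =>
    have e : w ^ (n+1) - w' ^ (n+1) = w * (w ^ n - w' ^ n) + (w - w') * w' ^ n := by ring
    rw [e]
    refine (abs_add_le _ _).trans ?_
    rw [abs_mul, abs_mul, abs_of_nonneg hw.1, abs_of_nonneg (pow_nonneg hw'.1 n)]
    have h1 : w * |w ^ n - w' ^ n| ≤ 1 * |w ^ n - w' ^ n| :=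
      mul_le_mul_of_nonneg_right hw.2 (abs_nonneg _)
    have h2 : |w - w'| * w' ^ n ≤ |w - w'| * 1 :=
      mul_le_mul_of_nonneg_left (pow_le_one₀ hw'.1 hw'.2) (abs_nonneg _)
    push_cast
    linarith

/-- elementary bounds for `x ≤ y` -/
lemma exp_diff {x y : ℝ} (hx : 0 ≤ x) (hxy : x ≤ y) :
    0 ≤ Real.exp (-x) - Real.exp (-y) ∧ Real.exp (-x) - Real.exp (-y) ≤ y - x ∧
    (1 - y) * (y - x) ≤ Real.exp (-x) - Real.exp (-y) := by
  have h1 : Real.exp (-y) = Real.exp (-x) * Real.exp (-(y - x)) := by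
    rw [← Real.exp_add]; congr 1; ring
  have h2 : Real.exp (-x) = Real.exp (-y) * Real.exp (y - x) := by
    rw [← Real.exp_add]; congr 1; ring
  have h3 := Real.add_one_le_exp (-(y - x))
  have h4 := Real.add_one_le_exp (y - x)
  have h5 : Real.exp (-x) ≤ 1 := by simpa using hx
  have h6 := Real.add_one_le_exp (-y)
  have h7 := Real.exp_pos (-x)
  have h8 := Real.exp_pos (-y)
  refine ⟨?_, ?_, ?_⟩
  · have : Real.exp (-y) ≤ Real.exp (-x) := Real.exp_le_exp.2 (by linarith)
    linarith
  · nlinarith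
  · nlinarith

lemma exp_lip {x y : ℝ} (hx : 0 ≤ x) (hy : 0 ≤ y) : |Real.exp (-x) - Real.exp (-y)| ≤ |x - y| := by
  rcases le_total x y with h | h
  · obtain ⟨a, b, _⟩ := exp_diff hx h
    rw [abs_of_nonneg a, abs_of_nonpos (by linarith)]; linarith
  · obtain ⟨a, b, _⟩ := exp_diff hy h
    rw [abs_of_nonpos (by linarith), abs_of_nonneg (by linarith)]; linarith

lemma comp_lip {x y p : ℝ} (hx : 0 ≤ x) (hy : 0 ≤ y) (hp : 0 ≤ p) (hp1 : p ≤ 1) :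
    |p * (Real.exp (-x) - Real.exp (-y)) + (x - y)| ≤ |x - y| := by
  rcases le_total x y with h | h
  · obtain ⟨a, b, _⟩ := exp_diff hx h
    rw [abs_of_nonpos (by linarith : x - y ≤ 0), abs_of_nonpos (by nlinarith)]; nlinarith
  · obtain ⟨a, b, _⟩ := exp_diff hy h
    rw [abs_of_nonneg (by linarith : 0 ≤ x - y), abs_of_nonneg (by nlinarith)]; nlinarith

lemma comp_lip1 {x y B : ℝ} (hx : 0 ≤ x) (hy : 0 ≤ y) (hxB : x ≤ B) (hyB : y ≤ B) :
    |(Real.exp (-x) - Real.exp (-y)) + (x - y)| ≤ B * |x - y| := by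
  rcases le_total x y with h | h
  · obtain ⟨a, b, c⟩ := exp_diff hx h
    rw [abs_of_nonpos (by linarith : x - y ≤ 0), abs_of_nonpos (by nlinarith)]; nlinarith
  · obtain ⟨a, b, c⟩ := exp_diff hy h
    rw [abs_of_nonneg (by linarith : 0 ≤ x - y), abs_of_nonneg (by nlinarith)]; nlinarith

lemma I1_lip {R v v' w w' : ℝ} (hR : 0 ≤ R) (z : ℝ≥0 × ℕ) (hv : v ∈ Icc 0 R) (hv' : v' ∈ Icc 0 R)
    (hw : w ∈ Icc (0:ℝ) 1) (hw' : w' ∈ Icc (0:ℝ) 1) :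
    |I1 z v w - I1 z v' w'| ≤ (1 + R) * g1 z * (|v - v'| + |w - w'|) := by
  obtain ⟨z0, n⟩ := z
  have hz : (0:ℝ) ≤ z0 := z0.2
  simp only [I1, Fz, g1]
  generalize (z0:ℝ) = z1 at *
  have e : Real.exp (-(z1 * v)) * w ^ n - 1 + v * z1 - (Real.exp (-(z1 * v')) * w' ^ n - 1 + v' * z1)
      = Real.exp (-(z1 * v)) * (w ^ n - w' ^ n) +
        (w' ^ n * (Real.exp (-(z1 * v)) - Real.exp (-(z1 * v'))) + (z1 * v - z1 * v')) := by ring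
  rw [e]
  have hzv : 0 ≤ z1 * v := mul_nonneg hz hv.1
  have hzv' : 0 ≤ z1 * v' := mul_nonneg hz hv'.1
  have hab : |z1 * v - z1 * v'| = z1 * |v - v'| := by
    rw [← mul_sub, abs_mul, abs_of_nonneg hz]
  have hm : 0 ≤ min z1 (z1 ^ 2) := le_min hz (by positivity)
  have p1 : |Real.exp (-(z1 * v)) * (w ^ n - w' ^ n)| ≤ n * |w - w'| := by
    rw [abs_mul, abs_of_pos (Real.exp_pos _)]
    have h1 : Real.exp (-(z1 * v)) ≤ 1 := by simpa using hzv
    calc _ ≤ 1 * |w ^ n - w' ^ n| := mul_le_mul_of_nonneg_right h1 (abs_nonneg _)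
      _ ≤ _ := by rw [one_mul]; exact pow_lip hw hw' n
  have p2 : |w' ^ n * (Real.exp (-(z1 * v)) - Real.exp (-(z1 * v'))) + (z1 * v - z1 * v')|
      ≤ (1 + R) * (min z1 (z1 ^ 2) + n) * |v - v'| := by
    rcases Nat.eq_zero_or_pos n with rfl | hn
    · have h1 := comp_lip hzv hzv' (p := w' ^ 0) (by simp) (by simp)
      have h2 := comp_lip1 hzv hzv' (B := z1 * R) (mul_le_mul_of_nonneg_left hv.2 hz)
        (mul_le_mul_of_nonneg_left hv'.2 hz)
      rw [hab] at h1 h2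
      simp only [pow_zero, one_mul, CharP.cast_eq_zero, add_zero] at *
      have hd := abs_nonneg (v - v')
      rcases le_total z1 (z1 ^ 2) with h | h
      · rw [min_eq_left h]
        have : 0 ≤ R * (z1 * |v - v'|) := by positivity
        linarith
      · rw [min_eq_right h]
        have : 0 ≤ z1 ^ 2 * |v - v'| := by positivity
        linarith
    · have h1 := comp_lip hzv hzv' (p := w' ^ n) (pow_nonneg hw'.1 _) (pow_le_one₀ hw'.1 hw'.2)
      rw [hab] at h1
      refine h1.trans (mul_le_mul_of_nonneg_right ?_ (abs_nonneg _))
      have hn1 : (1:ℝ) ≤ n := by exact_mod_cast hn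
      have : z1 ≤ min z1 (z1 ^ 2) + n := by
        rcases le_total z1 (z1 ^ 2) with h | h
        · rw [min_eq_left h]; linarith
        · rw [min_eq_right h]; nlinarith
      nlinarith
  refine (abs_add_le _ _).trans ((add_le_add p1 p2).trans ?_)
  have : (n:ℝ) * |w - w'| ≤ (1 + R) * (min z1 (z1 ^ 2) + n) * |w - w'| := by
    refine mul_le_mul_of_nonneg_right ?_ (abs_nonneg _)
    have : 0 ≤ R * (min z1 (z1 ^ 2) + n) := by positivity
    linarith
  linarith

lemma I2_lip {R v v' w w' : ℝ} (hR : 0 ≤ R) (z : ℝ≥0 × ℕ) (hv : v ∈ Icc 0 R) (hv' : v' ∈ Icc 0 R)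
    (hw : w ∈ Icc (0:ℝ) 1) (hw' : w' ∈ Icc (0:ℝ) 1) :
    |I2 z v w - I2 z v' w'| ≤ (3 + R) * g2 z * (|v - v'| + |w - w'|) := by
  obtain ⟨z0, n⟩ := z
  have hz : (0:ℝ) ≤ z0 := z0.2
  simp only [I2, Fz, g2]
  generalize (z0:ℝ) = z1 at *
  have e : Real.exp (-(z1 * v)) * w ^ n - w - (Real.exp (-(z1 * v')) * w' ^ n - w')
      = (Real.exp (-(z1 * v)) * (w ^ n - w' ^ n) - (w - w')) +
        (w' ^ n * (Real.exp (-(z1 * v)) - Real.exp (-(z1 * v')))) := by ring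
  rw [e]
  have hzv : 0 ≤ z1 * v := mul_nonneg hz hv.1
  have hzv' : 0 ≤ z1 * v' := mul_nonneg hz hv'.1
  have hab : |z1 * v - z1 * v'| = z1 * |v - v'| := by
    rw [← mul_sub, abs_mul, abs_of_nonneg hz]
  have he1 : Real.exp (-(z1 * v)) ≤ 1 := by simpa using hzv
  have p2 : |w' ^ n * (Real.exp (-(z1 * v)) - Real.exp (-(z1 * v')))| ≤ z1 * |v - v'| := by
    rw [abs_mul, abs_of_nonneg (pow_nonneg hw'.1 n), ← hab]
    calc _ ≤ 1 * |Real.exp (-(z1 * v)) - Real.exp (-(z1 * v'))| :=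
          mul_le_mul_of_nonneg_right (pow_le_one₀ hw'.1 hw'.2) (abs_nonneg _)
      _ ≤ _ := by rw [one_mul]; exact exp_lip hzv hzv'
  have p1 : |Real.exp (-(z1 * v)) * (w ^ n - w' ^ n) - (w - w')|
      ≤ (3 + R) * (z1 + |(n:ℝ) - 1|) * |w - w'| := by
    have hd := abs_nonneg (w - w')
    match n with
    | 0 =>
      simp only [pow_zero, sub_self, mul_zero, zero_sub, abs_neg, CharP.cast_eq_zero, abs_one]
      have : 0 ≤ (2 + R + (3 + R) * z1) * |w - w'| := by positivity
      linarith
    | 1 =>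
      simp only [pow_one, Nat.cast_one, sub_self, abs_zero, add_zero]
      have : Real.exp (-(z1 * v)) * (w - w') - (w - w') = (Real.exp (-(z1 * v)) - 1) * (w - w') := by
        ring
      rw [this, abs_mul, abs_of_nonpos (by linarith)]
      refine mul_le_mul_of_nonneg_right ?_ hd
      have h1 := Real.add_one_le_exp (-(z1 * v))
      have h2 : z1 * v ≤ z1 * R := mul_le_mul_of_nonneg_left hv.2 hz
      linarith
    | m + 2 =>
      have hp := pow_lip hw hw' (m + 2)
      have h1 : |Real.exp (-(z1 * v)) * (w ^ (m+2) - w' ^ (m+2))| ≤ ((m + 2 : ℕ) : ℝ) * |w - w'| := by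
        rw [abs_mul, abs_of_pos (Real.exp_pos _)]
        calc _ ≤ 1 * |w ^ (m+2) - w' ^ (m+2)| := mul_le_mul_of_nonneg_right he1 (abs_nonneg _)
          _ ≤ _ := by rw [one_mul]; exact hp
      refine (abs_sub _ _).trans ?_
      have hm : (0:ℝ) ≤ m := Nat.cast_nonneg m
      have h2 : |((m + 2 : ℕ):ℝ) - 1| = m + 1 := by
        push_cast
        rw [abs_of_nonneg (by linarith)]; ring
      rw [h2]
      push_cast at h1
      have : 0 ≤ ((3 + R) * z1 + R * (m + 1) + 2 * m) * |w - w'| := by positivity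
      linarith
  refine (abs_add_le _ _).trans ((add_le_add p1 p2).trans ?_)
  have : 0 ≤ ((2 + R) * z1 + (3 + R) * |(n:ℝ) - 1|) * |v - v'| := by positivity
  linarith

lemma I1_zero (z) : I1 z 0 1 = 0 := by simp [I1, Fz]
lemma I2_zero (z) : I2 z 0 1 = 0 := by simp [I2, Fz]

lemma I1_bd {R v w : ℝ} (hR : 0 ≤ R) (z : ℝ≥0 × ℕ) (hv : v ∈ Icc 0 R) (hw : w ∈ Icc (0:ℝ) 1) :
    |I1 z v w| ≤ (1 + R) * (R + 1) * g1 z := by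
  have h := I1_lip hR z hv ⟨le_rfl, hR⟩ hw ⟨zero_le_one, le_rfl⟩
  rw [I1_zero, sub_zero, sub_zero, abs_of_nonneg hv.1, abs_of_nonpos (by linarith [hw.2] : w - 1 ≤ 0)] at h
  refine h.trans ?_
  have := g1_nonneg z
  have h2 : (1 + R) * g1 z * (v + -(w - 1)) ≤ (1 + R) * g1 z * (R + 1) :=
    mul_le_mul_of_nonneg_left (by linarith [hv.2, hw.1]) (by positivity)
  linarith

lemma I2_bd {R v w : ℝ} (hR : 0 ≤ R) (z : ℝ≥0 × ℕ) (hv : v ∈ Icc 0 R) (hw : w ∈ Icc (0:ℝ) 1) :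
    |I2 z v w| ≤ (3 + R) * (R + 1) * g2 z := by
  have h := I2_lip hR z hv ⟨le_rfl, hR⟩ hw ⟨zero_le_one, le_rfl⟩
  rw [I2_zero, sub_zero, sub_zero, abs_of_nonneg hv.1, abs_of_nonpos (by linarith [hw.2] : w - 1 ≤ 0)] at h
  refine h.trans ?_
  have := g2_nonneg z
  have h2 : (3 + R) * g2 z * (v + -(w - 1)) ≤ (3 + R) * g2 z * (R + 1) :=
    mul_le_mul_of_nonneg_left (by linarith [hv.2, hw.1]) (by positivity)
  linarith

lemma I1_int {N : Measure (ℝ≥0 × ℕ)} (hN : Integrable g1 N) {v w : ℝ} (hv : 0 ≤ v)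
    (hw : w ∈ Icc (0:ℝ) 1) : Integrable (fun z => I1 z v w) N :=
  (hN.const_mul ((1 + v) * (v + 1))).mono' (I1_cont v w).measurable.aestronglyMeasurable
    (Eventually.of_forall fun z => I1_bd hv z ⟨hv, le_rfl⟩ hw)

lemma I2_int {N : Measure (ℝ≥0 × ℕ)} (hN : Integrable g2 N) {v w : ℝ} (hv : 0 ≤ v)
    (hw : w ∈ Icc (0:ℝ) 1) : Integrable (fun z => I2 z v w) N :=
  (hN.const_mul ((3 + v) * (v + 1))).mono' (I2_cont v w).measurable.aestronglyMeasurable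
    (Eventually.of_forall fun z => I2_bd hv z ⟨hv, le_rfl⟩ hw)

lemma I1_neg_le (z : ℝ≥0 × ℕ) {v w : ℝ} (hv : 0 ≤ v) (hw : w ∈ Icc (0:ℝ) 1) : -I1 z v w ≤ g1 z := by
  obtain ⟨z0, n⟩ := z
  have hz : (0:ℝ) ≤ z0 := z0.2
  simp only [I1, Fz, g1]
  generalize (z0:ℝ) = z1 at *
  have hm : 0 ≤ min z1 (z1 ^ 2) := le_min hz (by positivity)
  have hzv : 0 ≤ z1 * v := mul_nonneg hz hv
  rcases Nat.eq_zero_or_pos n with rfl | hn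
  · have h1 := Real.add_one_le_exp (-(z1 * v))
    simp only [pow_zero, CharP.cast_eq_zero]
    linarith
  · have hn1 : (1:ℝ) ≤ n := by exact_mod_cast hn
    have : 0 ≤ Real.exp (-(z1 * v)) * w ^ n := mul_nonneg (Real.exp_pos _).le (pow_nonneg hw.1 _)
    linarith

lemma taylor3 {x : ℝ} (hx : 0 ≤ x) : |x ^ 2 / 2 - (Real.exp (-x) - 1 + x)| ≤ x ^ 3 := by
  have hup : Real.exp (-x) ≤ 1 - x + x ^ 2 / 2 := by
    have h1 := Real.quadratic_le_exp_of_nonneg hx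
    rw [Real.exp_neg]
    rw [inv_le_iff_one_le_mul₀ (Real.exp_pos x)]
    have : 0 ≤ 1 - x + x ^ 2 / 2 := by nlinarith [sq_nonneg (x - 1)]
    have h2 := mul_le_mul_of_nonneg_left h1 this
    nlinarith [sq_nonneg (x ^ 2)]
  rw [abs_le]
  constructor
  · have : 0 ≤ x ^ 3 := by positivity
    linarith
  · have hmono : MonotoneOn (fun x : ℝ => Real.exp (-x) - 1 + x - x ^ 2 / 2 + x ^ 3) (Ici 0) := by
      refine monotoneOn_of_deriv_nonneg (convex_Ici 0) (by fun_prop) (by fun_prop) ?_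
      intro y hy
      rw [interior_Ici] at hy
      have hd : HasDerivAt (fun x : ℝ => Real.exp (-x) - 1 + x - x ^ 2 / 2 + x ^ 3)
          (Real.exp (-y) * (-1) + 1 - (2 * y) / 2 + 3 * y ^ 2) y := by
        have h1 : HasDerivAt (fun x : ℝ => Real.exp (-x)) (Real.exp (-y) * (-1)) y :=
          (hasDerivAt_neg y).exp
        have h2 : HasDerivAt (fun x : ℝ => x ^ 2) (2 * y) y := by simpa using hasDerivAt_pow 2 y
        have h3 : HasDerivAt (fun x : ℝ => x ^ 3) (3 * y ^ 2) y := by simpa using hasDerivAt_pow 3 y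
        exact (((h1.sub_const 1).add (hasDerivAt_id y)).sub (h2.div_const 2)).add h3
      rw [hd.deriv]
      have hy0 : 0 < y := hy
      have h1 := Real.quadratic_le_exp_of_nonneg hy0.le
      have hup : Real.exp (-y) ≤ 1 - y + y ^ 2 / 2 := by
        rw [Real.exp_neg]
        rw [inv_le_iff_one_le_mul₀ (Real.exp_pos y)]
        have : 0 ≤ 1 - y + y ^ 2 / 2 := by nlinarith [sq_nonneg (y - 1)]
        have h2 := mul_le_mul_of_nonneg_left h1 this
        nlinarith [sq_nonneg (y ^ 2)]
      nlinarith [sq_nonneg y]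
    have := hmono (mem_Ici.2 le_rfl) (mem_Ici.2 hx) hx
    simp only [neg_zero, Real.exp_zero, sub_self, add_zero, ne_eq, OfNat.ofNat_ne_zero, not_false_eq_true, zero_pow, zero_div] at this
    linarith

lemma taylor2 {x : ℝ} (hx : 0 ≤ x) : |Real.exp (-x) - 1 + x| ≤ x ^ 2 := by
  have h := comp_lip1 hx le_rfl le_rfl hx
  simp only [neg_zero, Real.exp_zero, sub_zero, abs_of_nonneg hx] at h
  rw [sq]; exact h


def Gfull (a α a21 : ℝ) (N1 N2 : Measure (ℝ≥0 × ℕ)) (x : ℝ × ℝ) : ℝ × ℝ :=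
  (-a * x.1 - α * x.1 ^ 2 - ∫ z, I1 z x.1 x.2 ∂N1, -a21 * x.1 * x.2 + ∫ z, I2 z x.1 x.2 ∂N2)

lemma Gfull_lip (a α a21 : ℝ) (hα : 0 ≤ α) (ha21 : 0 ≤ a21) {N1 N2 : Measure (ℝ≥0 × ℕ)}
    (h1 : Integrable g1 N1) (h2 : Integrable g2 N2) (R : ℝ) (hR : 0 ≤ R) :
    ∃ L : ℝ, 0 ≤ L ∧ ∀ x ∈ Icc 0 R ×ˢ Icc (0:ℝ) 1, ∀ y ∈ Icc 0 R ×ˢ Icc (0:ℝ) 1,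
      ‖Gfull a α a21 N1 N2 x - Gfull a α a21 N1 N2 y‖ ≤ L * ‖x - y‖ := by
  have hg1 : 0 ≤ ∫ z, g1 z ∂N1 := integral_nonneg g1_nonneg
  have hg2 : 0 ≤ ∫ z, g2 z ∂N2 := integral_nonneg g2_nonneg
  set A1 := ∫ z, g1 z ∂N1
  set A2 := ∫ z, g2 z ∂N2
  refine ⟨|a| + 2 * α * R + 2 * (1 + R) * A1 + (a21 * (R + 1) + 2 * (3 + R) * A2), by positivity, ?_⟩
  rintro ⟨v, w⟩ ⟨hv, hw⟩ ⟨v', w'⟩ ⟨hv', hw'⟩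
  simp only at hv hw hv' hw'
  set d := ‖(v, w) - (v', w')‖ with hd
  have d0 : 0 ≤ d := norm_nonneg _
  have dv : |v - v'| ≤ d := by
    rw [hd, Prod.norm_def]; exact le_max_left _ _
  have dw : |w - w'| ≤ d := by
    rw [hd, Prod.norm_def]; exact le_max_right _ _
  have i1 : |(∫ z, I1 z v w ∂N1) - ∫ z, I1 z v' w' ∂N1| ≤ 2 * (1 + R) * A1 * d := by
    rw [← integral_sub (I1_int h1 hv.1 hw) (I1_int h1 hv'.1 hw'), ← Real.norm_eq_abs]
    refine (norm_integral_le_of_norm_le (h1.const_mul ((1 + R) * (2 * d)))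
      (Eventually.of_forall fun z => ?_)).trans ?_
    · rw [Real.norm_eq_abs]
      refine (I1_lip hR z hv hv' hw hw').trans ?_
      have := g1_nonneg z
      have : (1 + R) * g1 z * (|v - v'| + |w - w'|) ≤ (1 + R) * g1 z * (2 * d) :=
        mul_le_mul_of_nonneg_left (by linarith) (by positivity)
      linarith
    · rw [integral_const_mul]; apply le_of_eq; ring
  have i2 : |(∫ z, I2 z v w ∂N2) - ∫ z, I2 z v' w' ∂N2| ≤ 2 * (3 + R) * A2 * d := by
    rw [← integral_sub (I2_int h2 hv.1 hw) (I2_int h2 hv'.1 hw'), ← Real.norm_eq_abs]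
    refine (norm_integral_le_of_norm_le (h2.const_mul ((3 + R) * (2 * d)))
      (Eventually.of_forall fun z => ?_)).trans ?_
    · rw [Real.norm_eq_abs]
      refine (I2_lip hR z hv hv' hw hw').trans ?_
      have := g2_nonneg z
      have : (3 + R) * g2 z * (|v - v'| + |w - w'|) ≤ (3 + R) * g2 z * (2 * d) :=
        mul_le_mul_of_nonneg_left (by linarith) (by positivity)
      linarith
    · rw [integral_const_mul]; apply le_of_eq; ring
  have q1 : |a * (v - v')| ≤ |a| * d := by
    rw [abs_mul]; exact mul_le_mul_of_nonneg_left dv (abs_nonneg _)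
  have q2 : |α * (v + v') * (v - v')| ≤ 2 * α * R * d := by
    rw [abs_mul, abs_of_nonneg (mul_nonneg hα (add_nonneg hv.1 hv'.1))]
    refine mul_le_mul ?_ dv (abs_nonneg _) (by positivity)
    have := mul_le_mul_of_nonneg_left (add_le_add hv.2 hv'.2) hα
    linarith
  have q3 : |a21 * (v * (w - w') + (v - v') * w')| ≤ a21 * (R + 1) * d := by
    rw [abs_mul, abs_of_nonneg ha21, mul_assoc]
    refine mul_le_mul_of_nonneg_left ((abs_add_le _ _).trans ?_) ha21
    rw [abs_mul, abs_mul, abs_of_nonneg hv.1, abs_of_nonneg hw'.1]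
    have e1 := mul_le_mul hv.2 dw (abs_nonneg _) hR
    have e2 := mul_le_mul dv hw'.2 hw'.1 d0
    linarith
  have n1 : 0 ≤ (a21 * (R + 1) + 2 * (3 + R) * A2) * d := by positivity
  have n2 : 0 ≤ (|a| + 2 * α * R + 2 * (1 + R) * A1) * d := by positivity
  rw [Prod.norm_def]
  simp only [Gfull, Prod.fst_sub, Prod.snd_sub, Real.norm_eq_abs]
  refine max_le ?_ ?_
  · have e : -a * v - α * v ^ 2 - (∫ z, I1 z v w ∂N1) - (-a * v' - α * v' ^ 2 - ∫ z, I1 z v' w' ∂N1)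
      = -(a * (v - v')) - α * (v + v') * (v - v') - ((∫ z, I1 z v w ∂N1) - ∫ z, I1 z v' w' ∂N1) := by
      ring
    rw [e]
    rw [abs_le] at *
    constructor <;> linarith [i1.1, i1.2, q1.1, q1.2, q2.1, q2.2]
  · have e : -a21 * v * w + (∫ z, I2 z v w ∂N2) - (-a21 * v' * w' + ∫ z, I2 z v' w' ∂N2)
      = -(a21 * (v * (w - w') + (v - v') * w')) + ((∫ z, I2 z v w ∂N2) - ∫ z, I2 z v' w' ∂N2) := by
      ring
    rw [e]
    rw [abs_le] at *
    constructor <;> linarith [i2.1, i2.2, q3.1, q3.2]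

lemma tail_zero {g : ℝ≥0 × ℕ → ℝ} (hg : Measurable g) (g0 : ∀ z, 0 ≤ g z)
    {N : Measure (ℝ≥0 × ℕ)} (h : Integrable g N) :
    Tendsto (fun k : ℕ => ∫ z in {z | 1 / ((k:ℝ) + 1) ≤ g z}ᶜ, g z ∂N) atTop (𝓝 0) := by
  have := tendsto_setIntegral_of_antitone (μ := N) (f := g)
    (s := fun k : ℕ => {z | 1 / ((k:ℝ) + 1) ≤ g z}ᶜ)
    (fun k => (measurableSet_le measurable_const hg).compl) ?_ ⟨0, h.integrableOn⟩
  · convert this using 2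
    symm
    apply setIntegral_eq_zero_of_forall_eq_zero
    intro z hz
    refine le_antisymm ?_ (g0 z)
    refine ge_of_tendsto' tendsto_one_div_add_atTop_nhds_zero_nat fun k => ?_
    have := mem_iInter.1 hz k
    simp only [mem_compl_iff, mem_ofPred_eq, not_le] at this
    exact this.le
  · intro i j hij
    simp only [compl_subset_compl]
    intro z hz
    simp only [mem_ofPred_eq] at *
    refine le_trans ?_ hz
    exact one_div_le_one_div_of_le (by positivity) (by simpa using hij)

lemma trunc_finite {g : ℝ≥0 × ℕ → ℝ} {N : Measure (ℝ≥0 × ℕ)} (h : Integrable g N) (k : ℕ) :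
    IsFiniteMeasure (N.restrict {z | 1 / ((k:ℝ) + 1) ≤ g z}) := by
  refine ⟨?_⟩
  rw [Measure.restrict_apply_univ]
  exact h.measure_ge_lt_top (by positivity)

def Kk (g : ℝ≥0 × ℕ → ℝ) (k : ℕ) : Set (ℝ≥0 × ℕ) := {z | 1 / ((k:ℝ) + 1) ≤ g z}
def epsn (k : ℕ) : ℝ≥0 := 1 / ((k:ℝ≥0) + 1)
def nu1 (α : ℝ) (N1 : Measure (ℝ≥0 × ℕ)) (k : ℕ) : Measure (ℝ≥0 × ℕ) :=
  N1.restrict (Kk g1 k) + (2 * α * ((k:ℝ) + 1) ^ 2).toNNReal • Measure.dirac (epsn k, 0)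
def nu2 (a21 : ℝ) (N2 : Measure (ℝ≥0 × ℕ)) (k : ℕ) : Measure (ℝ≥0 × ℕ) :=
  N2.restrict (Kk g2 k) + (a21 * ((k:ℝ) + 1)).toNNReal • Measure.dirac (epsn k, 1)
def ck (a α : ℝ) (N1 : Measure (ℝ≥0 × ℕ)) (k : ℕ) : ℝ :=
  a + 2 * α * ((k:ℝ) + 1) + ∫ z in Kk g1 k, (z.1 : ℝ) ∂N1

lemma Kk_meas {g : ℝ≥0 × ℕ → ℝ} (hg : Measurable g) (k) : MeasurableSet (Kk g k) :=
  measurableSet_le measurable_const hg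

lemma Gapp_eq {a α a21 : ℝ} (hα : 0 ≤ α) (ha21 : 0 ≤ a21) {N1 N2 : Measure (ℝ≥0 × ℕ)}
    (h1 : Integrable g1 N1) (h2 : Integrable g2 N2) (k : ℕ) {v w : ℝ} (hv : 0 ≤ v)
    (hw : w ∈ Icc (0:ℝ) 1) :
    Gapp (ck a α N1 k) (nu1 α N1 k) (nu2 a21 N2 k) (v, w) =
      (-a * v - (∫ z in Kk g1 k, I1 z v w ∂N1) -
        2 * α * ((k:ℝ) + 1) ^ 2 * (Real.exp (-(v / ((k:ℝ) + 1))) - 1 + v / ((k:ℝ) + 1)),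
      (∫ z in Kk g2 k, I2 z v w ∂N2) +
        a21 * ((k:ℝ) + 1) * w * (Real.exp (-(v / ((k:ℝ) + 1))) - 1)) := by
  have : IsFiniteMeasure (N1.restrict (Kk g1 k)) := trunc_finite h1 k
  have : IsFiniteMeasure (N2.restrict (Kk g2 k)) := trunc_finite h2 k
  have hk : (0:ℝ) < (k:ℝ) + 1 := by positivity
  have heps : (epsn k : ℝ) * v = v / ((k:ℝ) + 1) := by
    simp [epsn]; ring
  have hz1 : Integrable (fun z : ℝ≥0 × ℕ => (z.1 : ℝ)) (N1.restrict (Kk g1 k)) := by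
    refine ((integrable_const 1).add h1.integrableOn).mono' (by fun_prop)
      (Eventually.of_forall fun z => ?_)
    obtain ⟨z0, n⟩ := z
    have hz : (0:ℝ) ≤ z0 := z0.2
    simp only [g1, Pi.add_apply]
    have hn : (0:ℝ) ≤ n := Nat.cast_nonneg n
    generalize (z0:ℝ) = z1 at *
    rw [Real.norm_eq_abs, abs_of_nonneg hz]
    rcases le_total z1 (z1 ^ 2) with h | h
    · rw [min_eq_left h]; linarith
    · rw [min_eq_right h]; nlinarith
  have hF1 := Fz_int (N1.restrict (Kk g1 k)) hv hw.1 hw.2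
  have hF2 := Fz_int (N2.restrict (Kk g2 k)) hv hw.1 hw.2
  have iI1 : Integrable (fun z => I1 z v w) (N1.restrict (Kk g1 k)) := (I1_int h1 hv hw).integrableOn
  ext
  · simp only [Gapp, nu1, ck]
    have hi : Integrable (fun z => 1 - Fz z v w)
        ((2 * α * ((k:ℝ) + 1) ^ 2).toNNReal • Measure.dirac (epsn k, 0)) :=
      (integrable_const 1).sub (Fz_int _ hv hw.1 hw.2)
    have hj : Integrable (fun z => 1 - Fz z v w) (N1.restrict (Kk g1 k)) :=
      (integrable_const 1).sub hF1
    rw [integral_add_measure hj hi]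
    rw [integral_smul_nnreal_measure, integral_dirac]
    have : ∫ z in Kk g1 k, (1 - Fz z v w) ∂N1 =
        (∫ z in Kk g1 k, (z.1:ℝ) ∂N1) * v - ∫ z in Kk g1 k, I1 z v w ∂N1 := by
      rw [← integral_mul_const, ← integral_sub (hz1.mul_const v) iI1]
      congr 1; ext z; simp only [I1]; ring
    rw [this, NNReal.smul_def, smul_eq_mul, Real.coe_toNNReal _ (by positivity)]
    simp only [Fz, heps, pow_zero, mul_one]
    field_simp
    ring
  · simp only [Gapp, nu2]
    have hi : Integrable (fun z => Fz z v w - w)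
        ((a21 * ((k:ℝ) + 1)).toNNReal • Measure.dirac (epsn k, 1)) :=
      (Fz_int _ hv hw.1 hw.2).sub (integrable_const w)
    have hj : Integrable (fun z => Fz z v w - w) (N2.restrict (Kk g2 k)) :=
      hF2.sub (integrable_const w)
    rw [integral_add_measure hj hi]
    rw [integral_smul_nnreal_measure, integral_dirac]
    rw [NNReal.smul_def, smul_eq_mul, Real.coe_toNNReal _ (by positivity)]
    simp only [Fz, heps, pow_one, I2]
    ring

lemma exists_lap_full {a α a21 : ℝ} (hα : 0 ≤ α) (ha21 : 0 ≤ a21) {N1 N2 : Measure (ℝ≥0 × ℕ)}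
    (h1 : Integrable g1 N1) (h2 : Integrable g2 N2)
    {T : ℝ} (hT : 0 ≤ T) (U : ℝ≥0 × ℝ≥0 → ℝ → ℝ × ℝ)
    (hU0 : ∀ l, U l 0 = lam0 l)
    (hUc : ∀ l, ContinuousOn (U l) (Icc 0 T))
    (hUd : ∀ l, ∀ t ∈ Ico 0 T, HasDerivWithinAt (U l) (Gfull a α a21 N1 N2 (U l t)) (Ici t) t)
    (hU : ∀ l, ∀ t ∈ Icc 0 T, 0 ≤ (U l t).1 ∧ 0 ≤ (U l t).2 ∧ (U l t).2 ≤ 1)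
    (u1 : ℝ) (hu1 : 0 ≤ u1) (u2 : ℕ) :
    IsLap (fun l => Real.exp (-(u1 * (U l T).1)) * (U l T).2 ^ u2) := by
  have f1 : ∀ k, IsFiniteMeasure (nu1 α N1 k) := fun k => by
    have : IsFiniteMeasure (N1.restrict (Kk g1 k)) := trunc_finite h1 k
    unfold nu1; infer_instance
  have f2 : ∀ k, IsFiniteMeasure (nu2 a21 N2 k) := fun k => by
    have : IsFiniteMeasure (N2.restrict (Kk g2 k)) := trunc_finite h2 k
    unfold nu2; infer_instance
  refine exists_lap (Gfull_lip a α a21 hα ha21 h1 h2) (ck a α N1) (nu1 α N1) (nu2 a21 N2)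
    ?_ (A := |a|) (C := ∫ z, g1 z ∂N1) (abs_nonneg _) (integral_nonneg g1_nonneg) ?_ hT U hU0 hUc hUd hU u1 hu1 u2
  · intro R hR
    have t1 : ∀ k, 0 ≤ ∫ z in (Kk g1 k)ᶜ, g1 z ∂N1 := fun k => integral_nonneg g1_nonneg
    have t2 : ∀ k, 0 ≤ ∫ z in (Kk g2 k)ᶜ, g2 z ∂N2 := fun k => integral_nonneg g2_nonneg
    refine ⟨fun k => 2 * α * R ^ 3 * (1 / ((k:ℝ) + 1)) +
      (1 + R) * (R + 1) * (∫ z in (Kk g1 k)ᶜ, g1 z ∂N1) + (a21 * R ^ 2 * (1 / ((k:ℝ) + 1)) +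
      (3 + R) * (R + 1) * (∫ z in (Kk g2 k)ᶜ, g2 z ∂N2)), ?_, ?_, ?_⟩
    · intro k
      have := t1 k
      have := t2 k
      positivity
    · have s1 : Tendsto (fun k : ℕ => ∫ z in (Kk g1 k)ᶜ, g1 z ∂N1) atTop (𝓝 0) := tail_zero g1_cont.measurable g1_nonneg h1
      have s2 : Tendsto (fun k : ℕ => ∫ z in (Kk g2 k)ᶜ, g2 z ∂N2) atTop (𝓝 0) := tail_zero g2_cont.measurable g2_nonneg h2
      have s3 := tendsto_one_div_add_atTop_nhds_zero_nat (𝕜 := ℝ)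
      have := ((s3.const_mul (2 * α * R ^ 3)).add (s1.const_mul ((1 + R) * (R + 1)))).add
        ((s3.const_mul (a21 * R ^ 2)).add (s2.const_mul ((3 + R) * (R + 1))))
      simpa using this
    · rintro k ⟨v, w⟩ ⟨hv, hw⟩
      simp only at hv hw
      have t1 := t1 k
      have t2 := t2 k
      rw [Gapp_eq hα ha21 h1 h2 k hv.1 hw]
      have hk : (0:ℝ) < (k:ℝ) + 1 := by positivity
      have b1 : |∫ z in (Kk g1 k)ᶜ, I1 z v w ∂N1| ≤ (1 + R) * (R + 1) * (∫ z in (Kk g1 k)ᶜ, g1 z ∂N1) := by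
        rw [← integral_const_mul, ← Real.norm_eq_abs]
        exact norm_integral_le_of_norm_le (h1.integrableOn.const_mul _)
          (Eventually.of_forall fun z => I1_bd hR z hv hw)
      have b2 : |∫ z in (Kk g2 k)ᶜ, I2 z v w ∂N2| ≤ (3 + R) * (R + 1) * (∫ z in (Kk g2 k)ᶜ, g2 z ∂N2) := by
        rw [← integral_const_mul, ← Real.norm_eq_abs]
        exact norm_integral_le_of_norm_le (h2.integrableOn.const_mul _)
          (Eventually.of_forall fun z => I2_bd hR z hv hw)
      have e1 := integral_add_compl (Kk_meas g1_cont.measurable k) (I1_int h1 hv.1 hw)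
      have e2 := integral_add_compl (Kk_meas g2_cont.measurable k) (I2_int h2 hv.1 hw)
      have hx : 0 ≤ v / ((k:ℝ) + 1) := div_nonneg hv.1 hk.le
      have hxR : v / ((k:ℝ) + 1) ≤ R / ((k:ℝ) + 1) := div_le_div_of_nonneg_right hv.2 hk.le
      have q1 : |α * v ^ 2 - 2 * α * ((k:ℝ) + 1) ^ 2 * (Real.exp (-(v / ((k:ℝ) + 1))) - 1 + v / ((k:ℝ) + 1))|
          ≤ 2 * α * R ^ 3 * (1 / ((k:ℝ) + 1)) := by
        have : α * v ^ 2 - 2 * α * ((k:ℝ) + 1) ^ 2 * (Real.exp (-(v / ((k:ℝ) + 1))) - 1 + v / ((k:ℝ) + 1))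
          = 2 * α * ((k:ℝ) + 1) ^ 2 * ((v / ((k:ℝ) + 1)) ^ 2 / 2 - (Real.exp (-(v / ((k:ℝ) + 1))) - 1 + v / ((k:ℝ) + 1))) := by
          field_simp
        rw [this, abs_mul, abs_of_nonneg (by positivity)]
        calc _ ≤ 2 * α * ((k:ℝ) + 1) ^ 2 * (R / ((k:ℝ) + 1)) ^ 3 :=
              mul_le_mul_of_nonneg_left ((taylor3 hx).trans (pow_le_pow_left₀ hx hxR 3)) (by positivity)
          _ = _ := by field_simp
      have q2 : |a21 * ((k:ℝ) + 1) * w * (Real.exp (-(v / ((k:ℝ) + 1))) - 1 + v / ((k:ℝ) + 1))|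
          ≤ a21 * R ^ 2 * (1 / ((k:ℝ) + 1)) := by
        have hc : 0 ≤ a21 * ((k:ℝ) + 1) * w := mul_nonneg (by positivity) hw.1
        rw [abs_mul, abs_of_nonneg hc]
        calc _ ≤ a21 * ((k:ℝ) + 1) * w * (R / ((k:ℝ) + 1)) ^ 2 :=
              mul_le_mul_of_nonneg_left ((taylor2 hx).trans (pow_le_pow_left₀ hx hxR 2)) hc
          _ ≤ a21 * ((k:ℝ) + 1) * 1 * (R / ((k:ℝ) + 1)) ^ 2 := by
              have := hw.2
              gcongr
          _ = _ := by field_simp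
      have q3 : a21 * ((k:ℝ) + 1) * w * (Real.exp (-(v / ((k:ℝ) + 1))) - 1 + v / ((k:ℝ) + 1)) =
          a21 * ((k:ℝ) + 1) * w * (Real.exp (-(v / ((k:ℝ) + 1))) - 1) + a21 * v * w := by
        field_simp
      have n1 : 0 ≤ 2 * α * R ^ 3 * (1 / ((k:ℝ) + 1)) +
        (1 + R) * (R + 1) * (∫ z in (Kk g1 k)ᶜ, g1 z ∂N1) := by positivity
      have n2 : 0 ≤ a21 * R ^ 2 * (1 / ((k:ℝ) + 1)) +
        (3 + R) * (R + 1) * (∫ z in (Kk g2 k)ᶜ, g2 z ∂N2) := by positivity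
      rw [q3] at q2
      rw [Prod.norm_def]
      simp only [Gfull, Prod.fst_sub, Prod.snd_sub, Real.norm_eq_abs]
      rw [abs_le] at b1 b2 q1 q2
      refine max_le ?_ ?_
      · rw [abs_le]
        constructor <;> linarith [b1.1, b1.2, q1.1, q1.2]
      · rw [abs_le]
        constructor <;> linarith [b2.1, b2.2, q2.1, q2.2]
  · rintro k ⟨v, w⟩ hv hw hw1
    simp only at hv hw hw1
    rw [Gapp_eq hα ha21 h1 h2 k hv ⟨hw, hw1⟩]
    simp only
    have hk : (0:ℝ) < (k:ℝ) + 1 := by positivity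
    have e := Real.add_one_le_exp (-(v / ((k:ℝ) + 1)))
    have e2 : 0 ≤ 2 * α * ((k:ℝ) + 1) ^ 2 * (Real.exp (-(v / ((k:ℝ) + 1))) - 1 + v / ((k:ℝ) + 1)) :=
      mul_nonneg (by positivity) (by linarith)
    have e3 : -(∫ z in Kk g1 k, I1 z v w ∂N1) ≤ ∫ z, g1 z ∂N1 := by
      rw [← integral_neg]
      calc _ ≤ ∫ z in Kk g1 k, g1 z ∂N1 :=
            integral_mono (I1_int h1 hv ⟨hw, hw1⟩).integrableOn.neg h1.integrableOn
              fun z => I1_neg_le z hv ⟨hw, hw1⟩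
        _ ≤ _ := setIntegral_le_integral h1 (Eventually.of_forall g1_nonneg)
    have e4 : -a * v ≤ |a| * v := mul_le_mul_of_nonneg_right (neg_le_abs a) hv
    linarith


def tr1 (z : ℝ × ℝ) : ℝ≥0 × ℕ := (z.1.toNNReal, ⌊z.2⌋₊)
def tr2 (z : ℝ × ℝ) : ℝ≥0 × ℕ := (z.1.toNNReal, ⌊z.2 + 1⌋₊)

lemma tr1_meas : Measurable tr1 :=
  (measurable_real_toNNReal.comp measurable_fst).prodMk (Nat.measurable_floor.comp measurable_snd)
lemma tr2_meas : Measurable tr2 :=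
  (measurable_real_toNNReal.comp measurable_fst).prodMk
    (Nat.measurable_floor.comp (measurable_snd.add_const 1))

lemma tr1_eq {z : ℝ × ℝ} (hz : z ∈ Mset) : ((tr1 z).1 : ℝ) = z.1 ∧ ((tr1 z).2 : ℝ) = z.2 := by
  obtain ⟨h0, n, hn⟩ := hz
  refine ⟨Real.coe_toNNReal _ h0, ?_⟩
  simp [tr1, hn]

lemma tr2_eq {z : ℝ × ℝ} (hz : z ∈ Mm1set) :
    ((tr2 z).1 : ℝ) = z.1 ∧ ((tr2 z).2 : ℝ) = z.2 + 1 := by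
  obtain ⟨h0, n, hn, h⟩ := hz
  refine ⟨Real.coe_toNNReal _ h0, ?_⟩
  obtain ⟨m, rfl⟩ : ∃ m : ℕ, n = m - 1 := ⟨(n + 1).toNat, by omega⟩
  simp [tr2, h]

lemma n1_ae (B : BranchingMechanism) : ∀ᵐ z ∂B.n1, z ∈ Mset := by
  rw [ae_iff]; exact B.n1_supp
lemma n2_ae (B : BranchingMechanism) : ∀ᵐ z ∂B.n2, z ∈ Mm1set := by
  rw [ae_iff]; exact B.n2_supp

lemma n1_integ (B : BranchingMechanism) : Integrable (fun z : ℝ × ℝ => min z.1 (z.1 ^ 2) + z.2) B.n1 := by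
  refine (lintegral_ofReal_ne_top_iff_integrable (by fun_prop) ?_).1 B.n1_moment
  filter_upwards [n1_ae B] with z hz
  obtain ⟨h0, n, hn⟩ := hz
  have : 0 ≤ min z.1 (z.1 ^ 2) := le_min h0 (by positivity)
  simp only [Pi.zero_apply, hn]; positivity

lemma n2_integ (B : BranchingMechanism) : Integrable (fun z : ℝ × ℝ => z.1 + |z.2|) B.n2 := by
  refine (lintegral_ofReal_ne_top_iff_integrable (by fun_prop) ?_).1 B.n2_moment
  filter_upwards [n2_ae B] with z hz
  have := hz.1
  simp only [Pi.zero_apply]; positivity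

lemma g1_integ (B : BranchingMechanism) : Integrable g1 (B.n1.map tr1) := by
  rw [integrable_map_measure g1_cont.measurable.aestronglyMeasurable tr1_meas.aemeasurable]
  refine (n1_integ B).congr ?_
  filter_upwards [n1_ae B] with z hz
  simp [g1, (tr1_eq hz).1, (tr1_eq hz).2]

lemma g2_integ (B : BranchingMechanism) : Integrable g2 (B.n2.map tr2) := by
  rw [integrable_map_measure g2_cont.measurable.aestronglyMeasurable tr2_meas.aemeasurable]
  refine (n2_integ B).congr ?_
  filter_upwards [n2_ae B] with z hz
  simp [g2, (tr2_eq hz).1, (tr2_eq hz).2]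

def GB (B : BranchingMechanism) : ℝ × ℝ → ℝ × ℝ :=
  Gfull B.a11 B.alpha B.a21 (B.n1.map tr1) (B.n2.map tr2)

lemma I1_tr {z : ℝ × ℝ} (hz : z ∈ Mset) (v l : ℝ) :
    I1 (tr1 z) v (Real.exp (-l)) = Real.exp (-(v * z.1 + l * z.2)) - 1 + v * z.1 := by
  simp only [I1, Fz]
  rw [← Real.exp_nat_mul, ← Real.exp_add, (tr1_eq hz).1, (tr1_eq hz).2]
  congr 3; ring

lemma I2_tr {z : ℝ × ℝ} (hz : z ∈ Mm1set) (v l : ℝ) :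
    I2 (tr2 z) v (Real.exp (-l)) = -Real.exp (-l) * (1 - Real.exp (-(v * z.1 + l * z.2))) := by
  simp only [I2, Fz]
  have : -Real.exp (-l) * (1 - Real.exp (-(v * z.1 + l * z.2))) =
    Real.exp (-l) * Real.exp (-(v * z.1 + l * z.2)) - Real.exp (-l) := by ring
  rw [this, ← Real.exp_nat_mul, ← Real.exp_add, ← Real.exp_add, (tr2_eq hz).1, (tr2_eq hz).2]
  congr 2; ring

lemma GB_eq (B : BranchingMechanism) (v l : ℝ) :
    GB B (v, Real.exp (-l)) = (mPhi1 B (v, l), -Real.exp (-l) * mPhi2 B (v, l)) := by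
  ext
  · simp only [GB, Gfull, mPhi1]
    rw [integral_map tr1_meas.aemeasurable (I1_cont _ _).measurable.aestronglyMeasurable]
    congr 1
    refine integral_congr_ae ?_
    filter_upwards [n1_ae B] with z hz
    exact I1_tr hz v l
  · simp only [GB, Gfull, mPhi2]
    rw [integral_map tr2_meas.aemeasurable (I2_cont _ _).measurable.aestronglyMeasurable]
    rw [mul_add, ← integral_const_mul]
    congr 1
    · ring
    refine integral_congr_ae ?_
    filter_upwards [n2_ae B] with z hz
    exact I2_tr hz v l

lemma exp_mem {l : ℝ} (hl : 0 ≤ l) : Real.exp (-l) ∈ Icc (0:ℝ) 1 :=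
  ⟨(Real.exp_pos _).le, by simpa using hl⟩

lemma phi1_integ (B : BranchingMechanism) {v l : ℝ} (hv : 0 ≤ v) (hl : 0 ≤ l) :
    Integrable (fun z : ℝ × ℝ => Real.exp (-(v * z.1 + l * z.2)) - 1 + v * z.1) B.n1 := by
  have h := I1_int (g1_integ B) hv (exp_mem hl)
  rw [integrable_map_measure (I1_cont _ _).measurable.aestronglyMeasurable tr1_meas.aemeasurable] at h
  refine h.congr ?_
  filter_upwards [n1_ae B] with z hz
  exact I1_tr hz v l

lemma phi2_integ (B : BranchingMechanism) {v l : ℝ} (hv : 0 ≤ v) (hl : 0 ≤ l) :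
    Integrable (fun z : ℝ × ℝ => 1 - Real.exp (-(v * z.1 + l * z.2))) B.n2 := by
  have h := I2_int (g2_integ B) hv (exp_mem hl)
  rw [integrable_map_measure (I2_cont _ _).measurable.aestronglyMeasurable tr2_meas.aemeasurable] at h
  refine (h.const_mul (-Real.exp l)).congr ?_
  filter_upwards [n2_ae B] with z hz
  simp only [Function.comp]
  rw [I2_tr hz v l]
  have : Real.exp l * Real.exp (-l) = 1 := by rw [← Real.exp_add]; simp
  linear_combination (1 - Real.exp (-(v * z.1 + l * z.2))) * this

lemma n1_z2 (B : BranchingMechanism) : Integrable (fun z : ℝ × ℝ => z.2) B.n1 := by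
  refine (n1_integ B).mono' (by fun_prop) ?_
  filter_upwards [n1_ae B] with z hz
  obtain ⟨h0, n, hn⟩ := hz
  have : 0 ≤ min z.1 (z.1 ^ 2) := le_min h0 (by positivity)
  rw [hn, Real.norm_eq_abs, abs_of_nonneg (Nat.cast_nonneg n)]; linarith
lemma n2_z1 (B : BranchingMechanism) : Integrable (fun z : ℝ × ℝ => z.1) B.n2 := by
  refine (n2_integ B).mono' (by fun_prop) ?_
  filter_upwards [n2_ae B] with z hz
  rw [Real.norm_eq_abs, abs_of_nonneg hz.1]; linarith [abs_nonneg z.2]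
lemma n2_z2 (B : BranchingMechanism) : Integrable (fun z : ℝ × ℝ => z.2) B.n2 := by
  refine (n2_integ B).mono' (by fun_prop) ?_
  filter_upwards [n2_ae B] with z hz
  rw [Real.norm_eq_abs]; linarith [hz.1]

lemma phi1_le (B : BranchingMechanism) {v l : ℝ} (hv : 0 ≤ v) (hl : 0 ≤ l) :
    mPhi1 B (v, l) ≤ H11 B * v + H12 B * l := by
  simp only [mPhi1, H11, H12]
  have h : -∫ z : ℝ × ℝ, (Real.exp (-(v * z.1 + l * z.2)) - 1 + v * z.1) ∂B.n1 ≤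
      (∫ z : ℝ × ℝ, z.2 ∂B.n1) * l := by
    rw [← integral_neg, ← integral_mul_const]
    refine integral_mono (phi1_integ B hv hl).neg ((n1_z2 B).mul_const l) fun z => ?_
    have := Real.add_one_le_exp (-(v * z.1 + l * z.2))
    simp only
    linarith
  have : 0 ≤ B.alpha * v ^ 2 := mul_nonneg B.alpha_nonneg (sq_nonneg v)
  linarith

lemma phi2_le (B : BranchingMechanism) {v l : ℝ} (hv : 0 ≤ v) (hl : 0 ≤ l) :
    mPhi2 B (v, l) ≤ H21 B * v + H22 B * l := by
  simp only [mPhi2, H21, H22]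
  have h : ∫ z : ℝ × ℝ, (1 - Real.exp (-(v * z.1 + l * z.2))) ∂B.n2 ≤
      (∫ z : ℝ × ℝ, z.1 ∂B.n2) * v + (∫ z : ℝ × ℝ, z.2 ∂B.n2) * l := by
    rw [← integral_mul_const, ← integral_mul_const, ← integral_add ((n2_z1 B).mul_const v) ((n2_z2 B).mul_const l)]
    refine integral_mono (phi2_integ B hv hl)
      (((n2_z1 B).mul_const v).add ((n2_z2 B).mul_const l)) fun z => ?_
    have := Real.add_one_le_exp (-(v * z.1 + l * z.2))
    simp only
    linarith
  linarith

lemma GB_cont (B : BranchingMechanism) : ContinuousOn (GB B) (Ici 0 ×ˢ Icc (0:ℝ) 1) := by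
  rintro ⟨v, w⟩ ⟨hv, hw⟩
  simp only [mem_Ici] at hv hw
  obtain ⟨L, hL, h⟩ := Gfull_lip B.a11 B.alpha B.a21 B.alpha_nonneg B.a21_nonneg (g1_integ B)
    (g2_integ B) (v + 1) (by linarith)
  have hlip : LipschitzOnWith L.toNNReal (GB B) (Icc 0 (v + 1) ×ˢ Icc (0:ℝ) 1) := by
    refine LipschitzOnWith.of_dist_le_mul fun x hx y hy => ?_
    rw [dist_eq_norm, dist_eq_norm, Real.coe_toNNReal _ hL]
    exact h x hx y hy
  have hc := hlip.continuousOn (v, w) ⟨⟨hv, by simp⟩, hw⟩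
  refine hc.mono_of_mem_nhdsWithin ?_
  rw [mem_nhdsWithin]
  refine ⟨{x | x.1 < v + 1}, isOpen_lt continuous_fst continuous_const, by simp, ?_⟩
  rintro ⟨v', w'⟩ ⟨h1, h2, h3⟩
  exact ⟨⟨h2, le_of_lt h1⟩, h3⟩

lemma phi_cont (B : BranchingMechanism) :
    ContinuousOn (mPhi1 B) (Ici 0 ×ˢ Ici 0) ∧ ContinuousOn (mPhi2 B) (Ici 0 ×ˢ Ici 0) := by
  have hc : ContinuousOn (fun x : ℝ × ℝ => GB B (x.1, Real.exp (-x.2))) (Ici 0 ×ˢ Ici 0) :=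
    (GB_cont B).comp (t := Ici 0 ×ˢ Icc (0:ℝ) 1) (by fun_prop) fun x hx => ⟨hx.1, exp_mem hx.2⟩
  constructor
  · refine hc.fst.congr fun x _ => ?_
    simp only [GB_eq]
  · have : ContinuousOn (fun x : ℝ × ℝ => -Real.exp x.2 * (GB B (x.1, Real.exp (-x.2))).2)
      (Ici 0 ×ˢ Ici 0) := ContinuousOn.mul (by fun_prop) hc.snd
    refine this.congr fun x _ => ?_
    simp only [GB_eq]
    have : Real.exp x.2 * Real.exp (-x.2) = 1 := by rw [← Real.exp_add]; simp
    linear_combination (-mPhi2 B x) * this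

lemma ftc_aux {p f : ℝ → ℝ} {c : ℝ} (hp : ContinuousOn p (Ici 0))
    (hf : ∀ t, 0 ≤ t → f t = c + ∫ s in (0:ℝ)..t, p s) (t : ℝ) (ht : 0 ≤ t) :
    HasDerivWithinAt f (p t) (Ici t) t := by
  have hq : Continuous (fun s => p (max s 0)) :=
    hp.comp_continuous (by fun_prop) fun s => mem_Ici.2 (le_max_right _ _)
  have hd : HasDerivAt (fun t => c + ∫ s in (0:ℝ)..t, p (max s 0)) (p (max t 0)) t :=
    (intervalIntegral.integral_hasDerivAt_right (hq.intervalIntegrable _ _)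
      (hq.stronglyMeasurableAtFilter _ _) hq.continuousAt).const_add c
  rw [max_eq_left ht] at hd
  have key : ∀ r, 0 ≤ r → f r = c + ∫ s in (0:ℝ)..r, p (max s 0) := by
    intro r hr
    rw [hf r hr]
    congr 1
    refine intervalIntegral.integral_congr fun s hs => ?_
    rw [uIcc_of_le hr] at hs
    simp only [max_eq_left hs.1]
  exact hd.hasDerivWithinAt.congr (fun r hr => key r (ht.trans hr)) (key t ht)

lemma sc_deriv {B : BranchingMechanism} {l : ℝ × ℝ} {V : ℝ → ℝ × ℝ} (h : SolvesCumulant B l V)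
    (t : ℝ) (ht : 0 ≤ t) : HasDerivWithinAt (fun s => (V s).1) (mPhi1 B (V t)) (Ici t) t ∧
      HasDerivWithinAt (fun s => (V s).2) (mPhi2 B (V t)) (Ici t) t := by
  obtain ⟨hc, hp, he⟩ := h
  have hm : MapsTo V (Ici 0) (Ici 0 ×ˢ Ici 0) := fun s hs => hp s hs
  exact ⟨ftc_aux ((phi_cont B).1.comp hc hm) (fun r hr => (he r hr).1) t ht,
    ftc_aux ((phi_cont B).2.comp hc hm) (fun r hr => (he r hr).2) t ht⟩

lemma sc_zero {B : BranchingMechanism} {l : ℝ × ℝ} {V : ℝ → ℝ × ℝ} (h : SolvesCumulant B l V) :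
    V 0 = l := by
  have := h.2.2 0 le_rfl
  ext
  · simpa using this.1
  · simpa using this.2

lemma sc_lap {B : BranchingMechanism} {V : ℝ → (ℝ × ℝ) → ℝ × ℝ}
    (hV : ∀ l : ℝ × ℝ, 0 ≤ l.1 → 0 ≤ l.2 → SolvesCumulant B l (fun t => V t l))
    {T : ℝ} (hT : 0 ≤ T) (u1 : ℝ) (hu1 : 0 ≤ u1) (u2 : ℕ) :
    IsLap (fun l => Real.exp (-(u1 * (V T (l.1, l.2)).1 + u2 * (V T (l.1, l.2)).2))) := by
  have h := exists_lap_full (a := B.a11) B.alpha_nonneg B.a21_nonneg (g1_integ B) (g2_integ B) hT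
    (fun l t => ((V t (l.1, l.2)).1, Real.exp (-(V t (l.1, l.2)).2))) ?_ ?_ ?_ ?_ u1 hu1 u2
  · convert h using 2 with l
    simp only
    rw [← Real.exp_nat_mul, ← Real.exp_add]
    congr 1; ring
  · intro l
    have := sc_zero (hV (l.1, l.2) l.1.2 l.2.2)
    simp [this, lam0]
  · intro l
    have := (hV (l.1, l.2) l.1.2 l.2.2).1.mono (Icc_subset_Ici_self : Icc 0 T ⊆ Ici 0)
    exact this.fst.prodMk (Real.continuous_exp.comp_continuousOn this.snd.neg)
  · intro l t ht
    have := sc_deriv (hV (l.1, l.2) l.1.2 l.2.2) t ht.1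
    have h3 := this.1.prodMk this.2.neg.exp
    have h4 : Gfull B.a11 B.alpha B.a21 (B.n1.map tr1) (B.n2.map tr2)
        ((V t (l.1, l.2)).1, Real.exp (-(V t (l.1, l.2)).2)) =
        (mPhi1 B (V t (l.1, l.2)),
          Real.exp (-(V t (l.1, l.2)).2) * -mPhi2 B (V t (l.1, l.2))) := by
      change GB B _ = _
      rw [GB_eq]
      simp
    rw [h4]
    exact h3
  · intro l t ht
    have := (hV (l.1, l.2) l.1.2 l.2.2).2.1 t ht.1
    exact ⟨this.1, exp_mem this.2⟩

lemma sc_decay {B : BranchingMechanism} (hdet : H11 B * H22 B - H12 B * H21 B > 0)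
    (htr : H11 B + H22 B < 0) :
    ∃ κ : ℝ, 0 < κ ∧ ∃ C : ℝ, 0 < C ∧ ∀ l : ℝ × ℝ, 0 ≤ l.1 → 0 ≤ l.2 → ∀ V, SolvesCumulant B l V →
      ∀ t, 0 ≤ t → (V t).1 + (V t).2 ≤ C * Real.exp (-κ * t) * (l.1 + l.2) := by
  have h12 : 0 ≤ H12 B := by
    refine integral_nonneg_of_ae ?_
    filter_upwards [n1_ae B] with z hz
    obtain ⟨h0, n, hn⟩ := hz
    simp [hn]
  have h21 : 0 ≤ H21 B := by
    refine add_nonneg B.a21_nonneg (integral_nonneg_of_ae ?_)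
    filter_upwards [n2_ae B] with z hz
    exact hz.1
  have hp : 0 < H11 B * H22 B := by nlinarith [mul_nonneg h12 h21]
  have h11 : H11 B < 0 := by
    by_contra h
    push Not at h
    nlinarith
  have h22 : H22 B < 0 := by
    by_contra h
    push Not at h
    nlinarith
  set D := H11 B * H22 B - H12 B * H21 B with hD
  set c1 := H21 B - H22 B with hc1
  set c2 := H12 B - H11 B with hc2
  have c1p : 0 < c1 := by linarith
  have c2p : 0 < c2 := by linarith
  set M := max c1 c2
  set m := min c1 c2
  have hM : 0 < M := lt_max_of_lt_left c1p
  have hm : 0 < m := lt_min c1p c2p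
  refine ⟨D / M, div_pos hdet hM, M / m, div_pos hM hm, ?_⟩
  intro l hl1 hl2 V hV t ht
  set κ := D / M with hκ
  have hκM : κ * M = D := by rw [hκ]; field_simp
  have hκ0 : 0 < κ := div_pos hdet hM
  have hmono := image_le_of_deriv_right_le_deriv_boundary (a := 0) (b := t)
    (f := fun s => Real.exp (κ * s) * (c1 * (V s).1 + c2 * (V s).2))
    (f' := fun s => Real.exp (κ * s) * κ * (c1 * (V s).1 + c2 * (V s).2) +
      Real.exp (κ * s) * (c1 * mPhi1 B (V s) + c2 * mPhi2 B (V s)))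
    (B := fun _ => c1 * l.1 + c2 * l.2) (B' := fun _ => 0) ?_ ?_ ?_ (by fun_prop)
    (fun x _ => hasDerivWithinAt_const _ _ _) ?_ (x := t) ⟨ht, le_rfl⟩
  · have hVt := hV.2.1 t ht
    have e : Real.exp (-κ * t) * Real.exp (κ * t) = 1 := by rw [← Real.exp_add]; simp
    have q1 : m * ((V t).1 + (V t).2) ≤ c1 * (V t).1 + c2 * (V t).2 := by
      have := mul_le_mul_of_nonneg_right (min_le_left c1 c2) hVt.1
      have := mul_le_mul_of_nonneg_right (min_le_right c1 c2) hVt.2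
      linarith
    have q2 : c1 * l.1 + c2 * l.2 ≤ M * (l.1 + l.2) := by
      have := mul_le_mul_of_nonneg_right (le_max_left c1 c2) hl1
      have := mul_le_mul_of_nonneg_right (le_max_right c1 c2) hl2
      linarith
    have q3 : c1 * (V t).1 + c2 * (V t).2 ≤ Real.exp (-κ * t) * (c1 * l.1 + c2 * l.2) := by
      calc _ = Real.exp (-κ * t) * (Real.exp (κ * t) * (c1 * (V t).1 + c2 * (V t).2)) := by
            linear_combination -(c1 * (V t).1 + c2 * (V t).2) * e
        _ ≤ _ := mul_le_mul_of_nonneg_left hmono (Real.exp_pos _).le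
    have q4 := mul_le_mul_of_nonneg_left q2 (Real.exp_pos (-κ * t)).le
    have : M / m * Real.exp (-κ * t) * (l.1 + l.2) = (Real.exp (-κ * t) * (M * (l.1 + l.2))) / m := by
      field_simp
    rw [this, le_div_iff₀ hm]
    linarith
  · have h1 := hV.1.mono (Icc_subset_Ici_self : Icc 0 t ⊆ Ici 0)
    have h2 := h1.fst
    have h3 := h1.snd
    fun_prop
  · intro s hs
    have := sc_deriv hV s hs.1
    have e1 : HasDerivWithinAt (fun s : ℝ => Real.exp (κ * s)) (Real.exp (κ * s) * κ) (Ici s) s := by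
      have := ((hasDerivAt_id s).const_mul κ).exp.hasDerivWithinAt (s := Ici s)
      simpa using this
    exact e1.mul ((this.1.const_mul c1).add (this.2.const_mul c2))
  · simp [sc_zero hV]
  · intro s hs
    have hVs := hV.2.1 s hs.1
    have p1 := mul_le_mul_of_nonneg_left (phi1_le B hVs.1 hVs.2) c1p.le
    have p2 := mul_le_mul_of_nonneg_left (phi2_le B hVs.1 hVs.2) c2p.le
    simp only [Prod.mk.eta] at p1 p2
    have q : κ * (c1 * (V s).1 + c2 * (V s).2) ≤ D * ((V s).1 + (V s).2) := by
      have a1 := mul_le_mul_of_nonneg_right (le_max_left c1 c2) hVs.1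
      have a2 := mul_le_mul_of_nonneg_right (le_max_right c1 c2) hVs.2
      have a3 := mul_le_mul_of_nonneg_left (add_le_add a1 a2) hκ0.le
      rw [← hκM]
      linarith
    have q2 : c1 * mPhi1 B (V s) + c2 * mPhi2 B (V s) ≤ -D * ((V s).1 + (V s).2) := by
      calc _ ≤ c1 * (H11 B * (V s).1 + H12 B * (V s).2) + c2 * (H21 B * (V s).1 + H22 B * (V s).2) := by
            linarith
        _ = _ := by rw [hc1, hc2, hD]; ring
    have : Real.exp (κ * s) * (κ * (c1 * (V s).1 + c2 * (V s).2) +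
      (c1 * mPhi1 B (V s) + c2 * mPhi2 B (V s))) ≤ 0 :=
      mul_nonpos_of_nonneg_of_nonpos (Real.exp_pos _).le (by linarith)
    linarith


lemma lim_slope {s : ℝ} (hs : 0 ≤ s) :
    Tendsto (fun k : ℕ => (1 - Real.exp (-(s / ((k:ℝ) + 1)))) * ((k:ℝ) + 1)) atTop (𝓝 s) := by
  rw [tendsto_iff_norm_sub_tendsto_zero]
  have h0 : Tendsto (fun k : ℕ => s ^ 2 * (1 / ((k:ℝ) + 1))) atTop (𝓝 0) := by
    simpa using (tendsto_one_div_add_atTop_nhds_zero_nat (𝕜 := ℝ)).const_mul (s ^ 2)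
  refine squeeze_zero (fun k => norm_nonneg _) (fun k => ?_) h0
  have hk : (0:ℝ) < (k:ℝ) + 1 := by positivity
  have ht := taylor2 (div_nonneg hs hk.le)
  have e : (1 - Real.exp (-(s / ((k:ℝ) + 1)))) * ((k:ℝ) + 1) - s =
      -((Real.exp (-(s / ((k:ℝ) + 1))) - 1 + s / ((k:ℝ) + 1)) * ((k:ℝ) + 1)) := by
    field_simp; ring
  rw [e, norm_neg, norm_mul, Real.norm_eq_abs, Real.norm_eq_abs, abs_of_pos hk]
  calc _ ≤ (s / ((k:ℝ) + 1)) ^ 2 * ((k:ℝ) + 1) := mul_le_mul_of_nonneg_right ht hk.le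
    _ = _ := by field_simp

lemma Q_exists {B : BranchingMechanism} {V : ℝ → (ℝ × ℝ) → ℝ × ℝ}
    (hV : ∀ l : ℝ × ℝ, 0 ≤ l.1 → 0 ≤ l.2 → SolvesCumulant B l (fun t => V t l))
    {t : ℝ} (ht : 0 ≤ t) {K : ℝ}
    (hK : ∀ l : ℝ × ℝ, 0 ≤ l.1 → 0 ≤ l.2 → (V t l).1 + (V t l).2 ≤ K * (l.1 + l.2))
    {u1 : ℝ} (hu1 : 0 ≤ u1) (u2 : ℕ) :
    ∃ Q : Measure (ℝ × ℝ), IsProbabilityMeasure Q ∧ (∀ᵐ z ∂Q, z ∈ quad) ∧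
      (∀ l : ℝ × ℝ, 0 ≤ l.1 → 0 ≤ l.2 → ∫ y, Real.exp (-(l.1 * y.1 + l.2 * y.2)) ∂Q =
        Real.exp (-(u1 * (V t l).1 + u2 * (V t l).2))) ∧
      ∫⁻ y, ENNReal.ofReal (y.1 + y.2) ∂Q ≤ ENNReal.ofReal (2 * K * (u1 + u2)) := by
  have hb : ∀ l : ℝ × ℝ, 0 ≤ l.1 → 0 ≤ l.2 → 0 ≤ u1 * (V t l).1 + u2 * (V t l).2 ∧
      u1 * (V t l).1 + u2 * (V t l).2 ≤ (u1 + u2) * (K * (l.1 + l.2)) := by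
    intro l h1 h2
    obtain ⟨p1, p2⟩ := (hV l h1 h2).2.1 t ht
    have hn : (0:ℝ) ≤ u2 := Nat.cast_nonneg _
    simp only at p1 p2
    refine ⟨by positivity, ?_⟩
    have := mul_le_mul_of_nonneg_left (hK l h1 h2) (add_nonneg hu1 hn)
    have := mul_nonneg hu1 p2
    have := mul_nonneg hn p1
    linarith
  have h1 := sc_lap hV ht u1 hu1 u2
  obtain ⟨Q, hQ, hq, hL⟩ := h1.toMeasure (by
    have hlim : Tendsto (fun n : ℕ => (u1 + u2) * (K * (1 / ((n:ℝ) + 1) + 1 / ((n:ℝ) + 1)))) atTop (𝓝 0) := by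
      have h := tendsto_one_div_add_atTop_nhds_zero_nat (𝕜 := ℝ)
      simpa using ((h.add h).const_mul K).const_mul (u1 + u2)
    have hsq := squeeze_zero (f := fun n : ℕ => u1 * (V t (1 / ((n:ℝ) + 1), 1 / ((n:ℝ) + 1))).1 +
      u2 * (V t (1 / ((n:ℝ) + 1), 1 / ((n:ℝ) + 1))).2)
      (fun n => (hb _ (by simp only; positivity) (by simp only; positivity)).1)
      (fun n => (hb _ (by simp only; positivity) (by simp only; positivity)).2) hlim
    have := (Real.continuous_exp.tendsto _).comp hsq.neg
    simpa [Function.comp_def] using this)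
  have hL' : ∀ l : ℝ × ℝ, 0 ≤ l.1 → 0 ≤ l.2 → ∫ y, Real.exp (-(l.1 * y.1 + l.2 * y.2)) ∂Q =
        Real.exp (-(u1 * (V t l).1 + u2 * (V t l).2)) :=
    fun l h1 h2 => hL (⟨l.1, h1⟩, ⟨l.2, h2⟩)
  refine ⟨Q, hQ, hq, hL', ?_⟩
  let f : ℕ → ℝ × ℝ → ENNReal := fun k y =>
    ENNReal.ofReal ((1 - Real.exp (-(1 / ((k:ℝ) + 1) * y.1 + 1 / ((k:ℝ) + 1) * y.2))) * ((k:ℝ) + 1))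
  have hf : ∀ k, Measurable (f k) := fun k => by fun_prop
  calc ∫⁻ y, ENNReal.ofReal (y.1 + y.2) ∂Q = ∫⁻ y, liminf (fun k => f k y) atTop ∂Q := by
        refine lintegral_congr_ae ?_
        filter_upwards [hq] with y hy
        have := (ENNReal.continuous_ofReal.tendsto _).comp (lim_slope (add_nonneg hy.1 hy.2))
        rw [← this.liminf_eq]
        congr 1
        ext k
        simp only [f, Function.comp]
        congr 5
        ring
    _ ≤ liminf (fun k => ∫⁻ y, f k y ∂Q) atTop := lintegral_liminf_le hf
    _ ≤ liminf (fun _ : ℕ => ENNReal.ofReal (2 * K * (u1 + u2))) atTop := by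
        refine liminf_le_liminf (Eventually.of_forall fun k => ?_)
        have hk : (0:ℝ) < (k:ℝ) + 1 := by positivity
        have hk' : (0:ℝ) ≤ 1 / ((k:ℝ) + 1) := by positivity
        have hle : ∀ y ∈ quad, Real.exp (-(1 / ((k:ℝ) + 1) * y.1 + 1 / ((k:ℝ) + 1) * y.2)) ≤ 1 := by
          intro y hy
          have := mul_nonneg hk' hy.1
          have := mul_nonneg hk' hy.2
          rw [Real.exp_le_one_iff]; linarith
        have hint : Integrable (fun y : ℝ × ℝ =>
            Real.exp (-(1 / ((k:ℝ) + 1) * y.1 + 1 / ((k:ℝ) + 1) * y.2))) Q := by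
          refine (integrable_const 1).mono' (by fun_prop) ?_
          filter_upwards [hq] with y hy
          rw [Real.norm_eq_abs, abs_of_pos (Real.exp_pos _)]
          exact hle y hy
        simp only [f]
        have hint2 : Integrable (fun y : ℝ × ℝ => (1 -
            Real.exp (-(1 / ((k:ℝ) + 1) * y.1 + 1 / ((k:ℝ) + 1) * y.2))) * ((k:ℝ) + 1)) Q :=
          ((integrable_const 1).sub hint).mul_const _
        rw [← ofReal_integral_eq_lintegral_ofReal hint2]
        · refine ENNReal.ofReal_le_ofReal ?_
          rw [integral_mul_const, integral_sub (integrable_const 1) hint,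
            hL' (1 / ((k:ℝ) + 1), 1 / ((k:ℝ) + 1)) hk' hk']
          simp only [integral_const, probReal_univ, smul_eq_mul, mul_one]
          have hbb := (hb (1 / ((k:ℝ) + 1), 1 / ((k:ℝ) + 1)) hk' hk').2
          set S := u1 * (V t (1 / ((k:ℝ) + 1), 1 / ((k:ℝ) + 1))).1 +
            u2 * (V t (1 / ((k:ℝ) + 1), 1 / ((k:ℝ) + 1))).2
          have he := Real.add_one_le_exp (-S)
          calc _ ≤ ((u1 + u2) * (K * (1 / ((k:ℝ) + 1) + 1 / ((k:ℝ) + 1)))) * ((k:ℝ) + 1) :=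
                mul_le_mul_of_nonneg_right (by linarith) hk.le
            _ = _ := by field_simp; ring
        · filter_upwards [hq] with y hy
          have := hle y hy
          exact mul_nonneg (by linarith) hk.le
    _ = _ := liminf_const _

lemma marg {A X Y P : Measure (ℝ × ℝ)} [IsProbabilityMeasure A] [IsProbabilityMeasure X]
    [IsProbabilityMeasure Y] [IsProbabilityMeasure P] (hA : ∀ᵐ z ∂A, z ∈ quad)
    (hX : ∀ᵐ z ∂X, z ∈ quad) (hP : ∀ᵐ z ∂P, z ∈ quad)
    (h : ∀ l : ℝ × ℝ, 0 ≤ l.1 → 0 ≤ l.2 → ∫ y, Real.exp (-(l.1 * y.1 + l.2 * y.2)) ∂P =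
      (∫ y, Real.exp (-(l.1 * y.1 + l.2 * y.2)) ∂A) * ∫ y, Real.exp (-(l.1 * y.1 + l.2 * y.2)) ∂X) :
    (A.prod X).map (fun w => w.1 + w.2) = P := by
  have hm : Measurable (fun w : (ℝ × ℝ) × (ℝ × ℝ) => w.1 + w.2) := by fun_prop
  have : IsProbabilityMeasure ((A.prod X).map (fun w => w.1 + w.2)) :=
    Measure.isProbabilityMeasure_map hm.aemeasurable
  refine lap_unique ?_ hP fun l h1 h2 => ?_
  · have hq : MeasurableSet quad :=
      (measurableSet_le measurable_const measurable_fst).inter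
        (measurableSet_le measurable_const measurable_snd)
    refine (ae_map_iff (p := fun z => z ∈ quad) hm.aemeasurable hq).2 ?_
    filter_upwards [(measurePreserving_fst (μ := A) (ν := X)).quasiMeasurePreserving.ae hA,
      (measurePreserving_snd (μ := A) (ν := X)).quasiMeasurePreserving.ae hX] with w h1 h2
    exact ⟨add_nonneg h1.1 h2.1, add_nonneg h1.2 h2.2⟩
  · rw [integral_map hm.aemeasurable (by fun_prop), h l h1 h2, ← integral_prod_mul]
    congr 1
    ext w
    rw [← Real.exp_add]
    congr 1
    simp only [Prod.fst_add, Prod.snd_add]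
    ring

lemma coupling_exists {A X Y P P' : Measure (ℝ × ℝ)} [IsProbabilityMeasure A] [IsProbabilityMeasure X]
    [IsProbabilityMeasure Y]
    (hX : ∀ᵐ z ∂X, z ∈ quad) (hY : ∀ᵐ z ∂Y, z ∈ quad)
    (h1 : (A.prod X).map (fun w => w.1 + w.2) = P)
    (h2 : (A.prod Y).map (fun w => w.1 + w.2) = P') :
    ∃ Pc, IsCoupling Pc P P' ∧ ∫⁻ w, ENNReal.ofReal (|w.1.1 - w.2.1| + |w.1.2 - w.2.2|) ∂Pc ≤
      (∫⁻ y, ENNReal.ofReal (y.1 + y.2) ∂X) + ∫⁻ y, ENNReal.ofReal (y.1 + y.2) ∂Y := by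
  let F : (ℝ × ℝ) × ((ℝ × ℝ) × (ℝ × ℝ)) → (ℝ × ℝ) × (ℝ × ℝ) := fun w => (w.1 + w.2.1, w.1 + w.2.2)
  have hF : Measurable F := by fun_prop
  have hs := measurePreserving_snd (μ := A) (ν := X.prod Y)
  have m1 := (measurePreserving_fst (μ := X) (ν := Y)).comp hs
  have m2 := (measurePreserving_snd (μ := X) (ν := Y)).comp hs
  refine ⟨(A.prod (X.prod Y)).map F, ⟨Measure.isProbabilityMeasure_map hF.aemeasurable, ?_, ?_⟩, ?_⟩
  · rw [Measure.map_map measurable_fst hF, ← h1]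
    have hp : MeasurePreserving (Prod.map id Prod.fst) (A.prod (X.prod Y)) (A.prod X) :=
      (MeasurePreserving.id A).prod measurePreserving_fst
    rw [← hp.map_eq, Measure.map_map (by fun_prop) hp.measurable]
    rfl
  · rw [Measure.map_map measurable_snd hF, ← h2]
    have hp : MeasurePreserving (Prod.map id Prod.snd) (A.prod (X.prod Y)) (A.prod Y) :=
      (MeasurePreserving.id A).prod measurePreserving_snd
    rw [← hp.map_eq, Measure.map_map (by fun_prop) hp.measurable]
    rfl
  · rw [lintegral_map (by fun_prop) hF, ← m1.lintegral_comp (by fun_prop),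
      ← m2.lintegral_comp (by fun_prop), ← lintegral_add_left (by fun_prop)]
    refine lintegral_mono_ae ?_
    filter_upwards [m1.quasiMeasurePreserving.ae hX, m2.quasiMeasurePreserving.ae hY] with w hx hy
    simp only [Function.comp] at *
    rw [← ENNReal.ofReal_add (add_nonneg hx.1 hx.2) (add_nonneg hy.1 hy.2)]
    refine ENNReal.ofReal_le_ofReal ?_
    simp only [F, Prod.fst_add, Prod.snd_add, add_sub_add_left_eq_sub]
    have e1 := abs_sub w.2.1.1 w.2.2.1
    have e2 := abs_sub w.2.1.2 w.2.2.2
    rw [abs_of_nonneg hx.1, abs_of_nonneg hy.1] at e1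
    rw [abs_of_nonneg hx.2, abs_of_nonneg hy.2] at e2
    linarith

lemma Mset_quad {P : Measure (ℝ × ℝ)} (h : P Msetᶜ = 0) : ∀ᵐ z ∂P, z ∈ quad := by
  have : ∀ᵐ z ∂P, z ∈ Mset := by rw [ae_iff]; exact h
  filter_upwards [this] with z hz
  obtain ⟨h0, n, hn⟩ := hz
  exact ⟨h0, by rw [hn]; positivity⟩

theorem final_aux (B : BranchingMechanism)
    (V : ℝ → (ℝ × ℝ) → ℝ × ℝ)
    (hV : ∀ l : ℝ × ℝ, 0 ≤ l.1 → 0 ≤ l.2 → SolvesCumulant B l (fun t => V t l))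
    (b : ℝ) (m : Measure (ℝ × ℝ))
    (P : ℝ → (ℝ × ℝ) → Measure (ℝ × ℝ))
    (hP : IsMSBITransition V b m P)
    (hdet : H11 B * H22 B - H12 B * H21 B > 0)
    (htr : H11 B + H22 B < 0) :
    ∃ lam : ℝ, 0 < lam ∧ ∃ θ : ℝ, 0 < θ ∧
      ∀ t : ℝ, 0 ≤ t → ∀ x ∈ Mset, ∀ y ∈ Mset,
        ∃ Pc : Measure ((ℝ × ℝ) × (ℝ × ℝ)), IsCoupling Pc (P t x) (P t y) ∧
          ∫⁻ w, ENNReal.ofReal (|w.1.1 - w.2.1| + |w.1.2 - w.2.2|) ∂Pc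
            ≤ ENNReal.ofReal
                (θ * Real.sqrt ((x.1 - y.1) ^ 2 + (x.2 - y.2) ^ 2) *
                  Real.exp (-lam * t)) := by
  obtain ⟨κ, hκ, C, hC, hdec⟩ := sc_decay hdet htr
  refine ⟨κ, hκ, 4 * C, by positivity, ?_⟩
  intro t ht x hx y hy
  have hK : ∀ l : ℝ × ℝ, 0 ≤ l.1 → 0 ≤ l.2 →
      (V t l).1 + (V t l).2 ≤ C * Real.exp (-κ * t) * (l.1 + l.2) :=
    fun l h1 h2 => hdec l h1 h2 _ (hV l h1 h2) t ht
  obtain ⟨Px, Sx, Lx⟩ := hP t ht x hx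
  obtain ⟨Py, Sy, Ly⟩ := hP t ht y hy
  obtain ⟨x1, x2⟩ := x
  obtain ⟨y1, y2⟩ := y
  obtain ⟨hx1, n, hn⟩ := hx
  obtain ⟨hy1, k, hk⟩ := hy
  simp only at hx1 hn hy1 hk
  subst hn hk
  obtain ⟨Pa, Sa, La⟩ := hP t ht (min x1 y1, ((min n k : ℕ) : ℝ)) ⟨le_min hx1 hy1, _, rfl⟩
  obtain ⟨X, hXp, hXq, hXL, hXm⟩ := Q_exists hV ht hK (u1 := x1 - min x1 y1)
    (by simp) (n - min n k)
  obtain ⟨Y, hYp, hYq, hYL, hYm⟩ := Q_exists hV ht hK (u1 := y1 - min x1 y1)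
    (by simp) (k - min n k)
  rw [Nat.cast_sub (min_le_left n k)] at hXm
  rw [Nat.cast_sub (min_le_right n k)] at hYm
  have mX := marg (P := P t (x1, (n:ℝ))) (Y := Y) (Mset_quad Sa) hXq (Mset_quad Sx) (by
    intro l h1 h2
    rw [Lx l h1 h2, La l h1 h2, hXL l h1 h2, ← Real.exp_add, Nat.cast_sub (min_le_left n k)]
    congr 1
    simp only
    ring)
  have mY := marg (P := P t (y1, (k:ℝ))) (Y := Y) (Mset_quad Sa) hYq (Mset_quad Sy) (by
    intro l h1 h2
    rw [Ly l h1 h2, La l h1 h2, hYL l h1 h2, ← Real.exp_add, Nat.cast_sub (min_le_right n k)]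
    congr 1
    simp only
    ring)
  obtain ⟨Pc, hPc, hcost⟩ := coupling_exists hXq hYq mX mY
  refine ⟨Pc, hPc, hcost.trans ((add_le_add hXm hYm).trans ?_)⟩
  have hE := Real.exp_pos (-κ * t)
  set E := Real.exp (-κ * t)
  have a1 : 0 ≤ x1 - min x1 y1 := by simp
  have a2 : 0 ≤ y1 - min x1 y1 := by simp
  have a3 : (0:ℝ) ≤ n - (min n k : ℕ) := by simp
  have a4 : (0:ℝ) ≤ k - (min n k : ℕ) := by simp
  rw [← ENNReal.ofReal_add (by positivity) (by positivity)]
  refine ENNReal.ofReal_le_ofReal ?_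
  have s1 : (x1 - min x1 y1) + (y1 - min x1 y1) = |x1 - y1| := by
    rcases le_total x1 y1 with h | h
    · rw [min_eq_left h, abs_of_nonpos (by linarith)]; ring
    · rw [min_eq_right h, abs_of_nonneg (by linarith)]; ring
  have s2 : ((n:ℝ) - (min n k : ℕ)) + (k - (min n k : ℕ)) = |(n:ℝ) - k| := by
    rw [Nat.cast_min]
    rcases le_total (n:ℝ) k with h | h
    · rw [min_eq_left h, abs_of_nonpos (by linarith)]; ring
    · rw [min_eq_right h, abs_of_nonneg (by linarith)]; ring
  have r1 : |x1 - y1| ≤ Real.sqrt ((x1 - y1) ^ 2 + ((n:ℝ) - k) ^ 2) :=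
    Real.abs_le_sqrt (by nlinarith [sq_nonneg ((n:ℝ) - k)])
  have r2 : |(n:ℝ) - k| ≤ Real.sqrt ((x1 - y1) ^ 2 + ((n:ℝ) - k) ^ 2) :=
    Real.abs_le_sqrt (by nlinarith [sq_nonneg (x1 - y1)])
  calc _ = 2 * (C * E) * (|x1 - y1| + |(n:ℝ) - k|) := by rw [← s1, ← s2]; ring
    _ ≤ 2 * (C * E) * (Real.sqrt ((x1 - y1) ^ 2 + ((n:ℝ) - k) ^ 2) +
        Real.sqrt ((x1 - y1) ^ 2 + ((n:ℝ) - k) ^ 2)) :=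
        mul_le_mul_of_nonneg_left (add_le_add r1 r2) (by positivity)
    _ = _ := by ring

/-- Exponential ergodicity in the `L¹`-Wasserstein distance for the
MSBI-process: if `det H > 0` and `trace H < 0`, there are `λ, ϑ > 0` such that for
all `t ≥ 0` and `x, y ∈ 𝕄` some coupling of `P^γ_t(x,·)` and `P^γ_t(y,·)` has cost
at most `ϑ |x-y| e^{-λt}`. -/
theorem exponential_ergodicity_MSBI (B : BranchingMechanism)
    (V : ℝ → (ℝ × ℝ) → ℝ × ℝ)
    (hV : ∀ l : ℝ × ℝ, 0 ≤ l.1 → 0 ≤ l.2 → SolvesCumulant B l (fun t => V t l))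
    (b : ℝ) (hb : 0 < b) (m : Measure (ℝ × ℝ))
    (hm : IsImmigrationMeasure m)
    -- `∫ (z₁ + z₂) m(dz) < ∞`
    (hm_moment : ∫⁻ z, ENNReal.ofReal (z.1 + z.2) ∂m ≠ ⊤)
    (P : ℝ → (ℝ × ℝ) → Measure (ℝ × ℝ))
    (hP : IsMSBITransition V b m P)
    (hdet : H11 B * H22 B - H12 B * H21 B > 0)
    (htr : H11 B + H22 B < 0) :
    ∃ lam : ℝ, 0 < lam ∧ ∃ θ : ℝ, 0 < θ ∧
      ∀ t : ℝ, 0 ≤ t → ∀ x ∈ Mset, ∀ y ∈ Mset,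
        ∃ Pc : Measure ((ℝ × ℝ) × (ℝ × ℝ)), IsCoupling Pc (P t x) (P t y) ∧
          ∫⁻ w, ENNReal.ofReal (|w.1.1 - w.2.1| + |w.1.2 - w.2.2|) ∂Pc
            ≤ ENNReal.ofReal
                (θ * Real.sqrt ((x.1 - y.1) ^ 2 + (x.2 - y.2) ^ 2) *
                  Real.exp (-lam * t)) := by
  exact final_aux B V hV b m P hP hdet htr
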